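/- arXiv:2103.12611 — 3 statements merged into one kernel-verified Lean document; each statement's English description precedes it below -/
import Mathlib

section
/- Fix N ≥ 1 and complex numbers ε₁, ε₂, a₁,…,a_N satisfying the genericity condition: a_b − a_c + iε₁ + jε₂ ≠ 0 for all b,c ∈ {1,…,N} and all integers i,j, unless b = c and i = j = 0. Let m₁,…,m_{2N} ∈ ℂ and P(x) = ∏_{f=1}^{2N}(x − m_f). For each N-tuple of Young diagrams λ̄ let T_{λ̄} be the multiset of complex numbers with Σ_{w∈T_{λ̄}} e^w = Σ_{b,c=1}^N e^{a_b−a_c}(χ*_{λ^{(c)}} + e^ε χ_{λ^{(b)}} − (1−e^{ε₁})(1−e^{ε₂})χ_{λ^{(b)}}χ*_{λ^{(c)}}) in the group algebra of (ℂ,+) (genericity guarantees every w ∈ T_{λ̄} is nonzero), and define μ̂(λ̄) = (−1)^{N|λ̄|}·[∏_{b=1}^N ∏_{□∈λ^{(b)}} ∏_{f=1}^{2N}(a_b + c(□) − m_f)] / ∏_{w∈T_{λ̄}} w, and Y(x)|_{λ̄} = ∏_{b=1}^N (x−a_b)·∏_{□∈λ^{(b)}} (x−a_b−c(□)−ε₁)(x−a_b−c(□)−ε₂)/[(x−a_b−c(□))(x−a_b−c(□)−ε)]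 ∈ ℂ(x). Then for every integer k ≥ 1 the rational function Σ_{λ̄ : |λ̄| = k} μ̂(λ̄)·Y(x+ε)|_{λ̄} + Σ_{λ̄ : |λ̄| = k−1} μ̂(λ̄)·P(x)/Y(x)|_{λ̄} is a polynomial in x (it has no poles); i.e., the average of the fundamental qq-character 𝒳(x) = Y(x+ε) + 𝔮·P(x)/Y(x) against the instanton pseudo-measure is, coefficientwise in 𝔮, a regular function of x. -/
open scoped BigOperators

noncomputable section

/-- The content of a (0-based) box. -/
def content (ε₁ ε₂ : ℂ) (c : ℕ × ℕ) : ℂ := (c.1 : ℂ) * ε₁ + (c.2 : ℂ) * ε₂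

/-- The basis element `e^w` of the group algebra `ℤ[ℂ]`. -/
def eExp (w : ℂ) : AddMonoidAlgebra ℤ ℂ := AddMonoidAlgebra.single w 1

/-- `χ_λ = Σ_{□∈λ} e^{c(□)}`. -/
def chi (ε₁ ε₂ : ℂ) (μ : YoungDiagram) : AddMonoidAlgebra ℤ ℂ :=
  ∑ c ∈ μ.cells, eExp (content ε₁ ε₂ c)

/-- `χ*_λ = Σ_{□∈λ} e^{−c(□)}`. -/
def chiStar (ε₁ ε₂ : ℂ) (μ : YoungDiagram) : AddMonoidAlgebra ℤ ℂ :=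
  ∑ c ∈ μ.cells, eExp (-(content ε₁ ε₂ c))

/-- The tangent character of an `N`-tuple of Young diagrams. -/
def tangentChar (N : ℕ) (ε₁ ε₂ : ℂ) (a : Fin N → ℂ)
    (lam : Fin N → YoungDiagram) : AddMonoidAlgebra ℤ ℂ :=
  ∑ b : Fin N, ∑ c : Fin N,
    eExp (a b - a c) *
      (chiStar ε₁ ε₂ (lam c) + eExp (ε₁ + ε₂) * chi ε₁ ε₂ (lam b) -
        (1 - eExp ε₁) * (1 - eExp ε₂) * chi ε₁ ε₂ (lam b) * chiStar ε₁ ε₂ (lam c))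

/-- The total number of boxes `|λ̄|` of an `N`-tuple of Young diagrams. -/
def totalCard (N : ℕ) (lam : Fin N → YoungDiagram) : ℕ := ∑ b : Fin N, (lam b).card

/-- The Y-observable `Y(x + s)|_λ̄`, as an element of `ℂ(x)`: the variable `x` is
shifted by `s` so that e.g. `Y(x + ε)` is obtained by taking `s = ε`. -/
def Yobs (N : ℕ) (ε₁ ε₂ : ℂ) (a : Fin N → ℂ) (s : ℂ)
    (lam : Fin N → YoungDiagram) : RatFunc ℂ :=
  ∏ b : Fin N,
    ((RatFunc.X + RatFunc.C s - RatFunc.C (a b)) *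
      ∏ c ∈ (lam b).cells,
        ((RatFunc.X + RatFunc.C s - RatFunc.C (a b + content ε₁ ε₂ c + ε₁)) *
            (RatFunc.X + RatFunc.C s - RatFunc.C (a b + content ε₁ ε₂ c + ε₂)) /
          ((RatFunc.X + RatFunc.C s - RatFunc.C (a b + content ε₁ ε₂ c)) *
            (RatFunc.X + RatFunc.C s - RatFunc.C (a b + content ε₁ ε₂ c + (ε₁ + ε₂))))))

/-- The matter polynomial `P(x + s) = ∏_f (x + s − m_f)`. -/
def Pmat (N : ℕ) (m : Fin (2 * N) → ℂ) (s : ℂ) : RatFunc ℂ :=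
  ∏ f : Fin (2 * N), (RatFunc.X + RatFunc.C s - RatFunc.C (m f))

/-- The instanton pseudo-measure weight
`μ̂(λ̄) = (−1)^{N|λ̄|}·[∏_b ∏_{□∈λ^{(b)}} ∏_f (a_b + c(□) − m_f)] / ∏_{w∈T_λ̄} w`. -/
def muHat (N : ℕ) (ε₁ ε₂ : ℂ) (a : Fin N → ℂ) (m : Fin (2 * N) → ℂ)
    (T : (Fin N → YoungDiagram) → Multiset ℂ) (lam : Fin N → YoungDiagram) : ℂ :=
  (-1 : ℂ) ^ (N * totalCard N lam) *
      (∏ b : Fin N, ∏ c ∈ (lam b).cells, ∏ f : Fin (2 * N),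
        (a b + content ε₁ ε₂ c - m f)) /
    (T lam).prod

/-!
A rational function is a polynomial as soon as it has no pole at any point `z`. The zeros and poles
of `Y` are simple and sit at the corners of the diagrams: by genericity, `1 / Y(x)|_λ̄` has a pole
at `z` exactly when a box with `a_b + c(□) = z` can be added to `λ̄`, and `Y(x + ε)|_ν̄` has one
exactly when such a box can be removed from `ν̄`. Hence the singular terms come in pairs
`ν̄ = λ̄ + □`, and only the residues within such a pair have to cancel.

Let `W` and `K` be the characters of the framing and of the boxes, and `ξ = a_b + c(□)`. Taking
the difference of `T = W K* + e^ε W* K - (1 - e^{ε₁})(1 - e^{ε₂}) K K*` along the pair gives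
`T_ν̄ - T_λ̄ = e^{-ξ} S_λ̄ + e^{ξ + ε} S*_ν̄` with `S = W - (1 - e^{ε₁})(1 - e^{ε₂}) K`. As `Y(x)`
is the multiplicative extension of `e^w ↦ x - w` evaluated at `S`, the ratio of the two weights `μ̂`
is, up to sign and matter factors, the inverse of the product of the leading coefficients of
`Y(x)|_λ̄` and `Y(x + ε)|_ν̄` at `ξ`, which makes the residues opposite.
-/

section LocalTheory

variable {K : Type*} [Field K] {z : K}

/-- The local ring of rational functions without a pole at `z`. -/
def regularAt (z : K) : Subalgebra K (RatFunc K) where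
  carrier := {F | F.denom.eval z ≠ 0}
  mul_mem' {F G} hF hG h :=
    mul_ne_zero hF hG <| by
      rw [← Polynomial.eval_mul]
      exact Polynomial.eval_eq_zero_of_dvd_of_eval_eq_zero (RatFunc.denom_mul_dvd F G) h
  add_mem' {F G} hF hG h :=
    mul_ne_zero hF hG <| by
      rw [← Polynomial.eval_mul]
      exact Polynomial.eval_eq_zero_of_dvd_of_eval_eq_zero (RatFunc.denom_add_dvd F G) h
  algebraMap_mem' c := by simp [RatFunc.algebraMap_eq_C]

lemma mem_regularAt_of_eq_div {F : RatFunc K} {p q : Polynomial K}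
    (hF : F = algebraMap _ _ p / algebraMap _ _ q) (hq : q.eval z ≠ 0) : F ∈ regularAt z := by
  subst hF
  exact fun h ↦ hq (Polynomial.eval_eq_zero_of_dvd_of_eval_eq_zero (RatFunc.denom_div_dvd p q) h)

lemma exists_algebraMap_eq_of_forall_mem_regularAt [IsAlgClosed K] {F : RatFunc K}
    (hF : ∀ z, F ∈ regularAt z) : ∃ p : Polynomial K, F = algebraMap (Polynomial K) _ p := by
  have hdeg : F.denom.degree = 0 := by
    by_contra h
    obtain ⟨z, hz⟩ := IsAlgClosed.exists_root F.denom h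
    exact hF z hz
  have hdenom : F.denom = 1 :=
    F.monic_denom.natDegree_eq_zero.mp (Polynomial.natDegree_eq_of_degree_eq_some hdeg)
  exact ⟨F.num, by simpa [hdenom] using F.num_div_denom.symm⟩

/-- `F` is regular at `z` with value `v` there; `RatFunc.eval` alone would return the junk value
`0` at a pole. -/
def HasValueAt (z : K) (F : RatFunc K) (v : K) : Prop :=
  F ∈ regularAt z ∧ F.eval (RingHom.id K) z = v

namespace HasValueAt

variable {F G : RatFunc K} {v w : K}

lemma algebraMap (z : K) (p : Polynomial K) :
    HasValueAt z (algebraMap (Polynomial K) (RatFunc K) p) (p.eval z) :=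
  ⟨mem_regularAt_of_eq_div (p := p) (q := 1) (by simp) (by simp), by simp [RatFunc.eval]⟩

lemma C (z c : K) : HasValueAt z (RatFunc.C c) c := by
  simpa using HasValueAt.algebraMap z (Polynomial.C c)

lemma X_add_C_sub_C (z s w : K) :
    HasValueAt z (RatFunc.X + RatFunc.C s - RatFunc.C w) (z + s - w) := by
  simpa using HasValueAt.algebraMap z (.X + .C s - .C w)

lemma add (hF : HasValueAt z F v) (hG : HasValueAt z G w) : HasValueAt z (F + G) (v + w) :=
  ⟨add_mem hF.1 hG.1, by rw [RatFunc.eval_add (.id K) z hF.1 hG.1, hF.2, hG.2]⟩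

lemma mul (hF : HasValueAt z F v) (hG : HasValueAt z G w) : HasValueAt z (F * G) (v * w) :=
  ⟨mul_mem hF.1 hG.1, by rw [RatFunc.eval_mul (.id K) z hF.1 hG.1, hF.2, hG.2]⟩

lemma inv (hF : HasValueAt z F v) (hv : v ≠ 0) : HasValueAt z F⁻¹ v⁻¹ := by
  have hF₀ : F ≠ 0 := by
    rintro rfl
    exact hv (by simpa using hF.2.symm)
  have hnum : F.num.eval z ≠ 0 := by
    intro h
    exact hv (by simpa [RatFunc.eval, Polynomial.eval₂_id, h] using hF.2.symm)
  have hreg : F⁻¹ ∈ regularAt z := fun h ↦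
    hnum (Polynomial.eval_eq_zero_of_dvd_of_eval_eq_zero (RatFunc.denom_inv_dvd hF₀) h)
  refine ⟨hreg, eq_inv_of_mul_eq_one_left ?_⟩
  rw [← hF.2, ← RatFunc.eval_mul (.id K) z hreg hF.1, inv_mul_cancel₀ hF₀, RatFunc.eval_one]

lemma prod {ι : Type*} (t : Finset ι) {F : ι → RatFunc K} {v : ι → K}
    (h : ∀ i ∈ t, HasValueAt z (F i) (v i)) : HasValueAt z (∏ i ∈ t, F i) (∏ i ∈ t, v i) := by
  induction t using Finset.cons_induction with
  | empty => simpa using HasValueAt.C z (1 : K)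
  | cons i t hi ih =>
    rw [Finset.forall_mem_cons] at h
    simpa only [Finset.prod_cons] using h.1.mul (ih h.2)

lemma pow (hF : HasValueAt z F v) (n : ℕ) : HasValueAt z (F ^ n) (v ^ n) := by
  simpa using prod (Finset.range n) fun _ _ ↦ hF

lemma zpow (hF : HasValueAt z F v) (hv : v ≠ 0) : ∀ n : ℤ, HasValueAt z (F ^ n) (v ^ n)
  | .ofNat n => by simpa using hF.pow n
  | .negSucc n => by simpa using (hF.pow (n + 1)).inv (pow_ne_zero _ hv)

end HasValueAt

lemma X_sub_C_ne_zero (z : K) : (RatFunc.X - RatFunc.C z : RatFunc K) ≠ 0 := by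
  simpa using RatFunc.algebraMap_ne_zero (Polynomial.X_sub_C_ne_zero z)

lemma mem_regularAt_of_hasValueAt_zero {F : RatFunc K}
    (hF : HasValueAt z ((RatFunc.X - RatFunc.C z) * F) 0) : F ∈ regularAt z := by
  set G := (RatFunc.X - RatFunc.C z) * F with hG
  have hden : G.denom.eval z ≠ 0 := hF.1
  obtain ⟨q, hq⟩ : Polynomial.X - Polynomial.C z ∣ G.num := by
    rw [Polynomial.dvd_iff_isRoot]
    simpa [RatFunc.eval, Polynomial.eval₂_id, hden] using hF.2
  refine mem_regularAt_of_eq_div (p := q) (q := G.denom) ?_ hden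
  apply mul_left_cancel₀ (X_sub_C_ne_zero z)
  rw [← hG, mul_div_assoc']
  conv_lhs => rw [← G.num_div_denom, hq]
  simp

lemma add_mem_regularAt_of_residues {F G U V : RatFunc K} {u v : K}
    (hF : F = (RatFunc.X - RatFunc.C z)⁻¹ * U) (hG : G = (RatFunc.X - RatFunc.C z)⁻¹ * V)
    (hU : HasValueAt z U u) (hV : HasValueAt z V v) (h : u + v = 0) : F + G ∈ regularAt z := by
  apply mem_regularAt_of_hasValueAt_zero
  rw [hF, hG, ← mul_add, mul_inv_cancel_left₀ (X_sub_C_ne_zero z), ← h]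
  exact hU.add hV

end LocalTheory

section MultiplicativeExtension

variable {M A : Type*} [CommGroupWithZero A]

/-- The multiplicative extension of `g` to the group algebra: it sends `∑ n_w e^w` to
`∏ g(w)^{n_w}`. -/
def charProd (g : M → A) (f : AddMonoidAlgebra ℤ M) : A :=
  f.coeff.prod fun w n ↦ g w ^ n

variable {g : M → A} {f : AddMonoidAlgebra ℤ M}

lemma charProd_neg : charProd g (-f) = (charProd g f)⁻¹ := by
  rw [charProd, AddMonoidAlgebra.coeff_neg, Finsupp.prod_neg_index fun _ ↦ zpow_zero _]
  simp [charProd, Finsupp.prod]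

lemma charProd_single (w : M) : charProd g (.single w 1) = g w := by
  simp [charProd]

lemma charProd_ne_zero (hg : ∀ w, g w ≠ 0) : charProd g f ≠ 0 :=
  Finset.prod_ne_zero_iff.mpr fun w _ ↦ zpow_ne_zero _ (hg w)

lemma charProd_add (hg : ∀ w, g w ≠ 0) (f₁ f₂ : AddMonoidAlgebra ℤ M) :
    charProd g (f₁ + f₂) = charProd g f₁ * charProd g f₂ :=
  Finsupp.prod_add_index' (fun _ ↦ zpow_zero _) fun w _ _ ↦ zpow_add₀ (hg w) ..

lemma charProd_sub (hg : ∀ w, g w ≠ 0) (f₁ f₂ : AddMonoidAlgebra ℤ M) :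
    charProd g (f₁ - f₂) = charProd g f₁ / charProd g f₂ := by
  rw [sub_eq_add_neg, charProd_add hg, charProd_neg, div_eq_mul_inv]

lemma charProd_sum (hg : ∀ w, g w ≠ 0) {ι : Type*} (t : Finset ι)
    (f : ι → AddMonoidAlgebra ℤ M) :
    charProd g (∑ i ∈ t, f i) = ∏ i ∈ t, charProd g (f i) := by
  induction t using Finset.cons_induction with
  | empty => simp [charProd]
  | cons i t hi ih => rw [Finset.sum_cons, Finset.prod_cons, charProd_add hg, ih]

lemma charProd_mul_fun (g h : M → A) (f : AddMonoidAlgebra ℤ M) :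
    charProd (fun w ↦ g w * h w) f = charProd g f * charProd h f := by
  simp only [charProd, mul_zpow, Finsupp.prod_mul]

lemma charProd_ite_eq [DecidableEq M] (c : A) (w₀ : M) (f : AddMonoidAlgebra ℤ M) :
    charProd (fun w ↦ if w = w₀ then c else 1) f = c ^ f.coeff w₀ := by
  rw [charProd, Finsupp.prod, Finset.prod_eq_single w₀ (fun w _ hw ↦ by simp [hw])
    (by simp +contextual),
    if_pos rfl]

lemma charProd_single_mul [AddGroup M] (g : M → A) (u : M) (f : AddMonoidAlgebra ℤ M) :
    charProd g (.single u 1 * f) = charProd (fun w ↦ g (u + w)) f := by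
  have h : (AddMonoidAlgebra.single u 1 * f).coeff = f.coeff.mapDomain (u + ·) := by
    ext w
    simpa using (Finsupp.mapDomain_apply (add_right_injective u) f.coeff (-u + w)).symm
  rw [charProd, h, Finsupp.prod_mapDomain_index_inj (add_right_injective u), charProd]

/-- The involution `χ ↦ χ*` of the group algebra given by `e^w ↦ e^{-w}`. -/
def dual [AddCommGroup M] : AddMonoidAlgebra ℤ M →+* AddMonoidAlgebra ℤ M :=
  AddMonoidAlgebra.mapDomainRingHom ℤ (negAddMonoidHom : M →+ M)

lemma dual_single [AddCommGroup M] (w : M) (n : ℤ) :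
    dual (.single w n) = AddMonoidAlgebra.single (-w) n := by
  simp [dual]

lemma coeff_dual [AddCommGroup M] (f : AddMonoidAlgebra ℤ M) (w : M) :
    (dual f).coeff w = f.coeff (-w) := by
  simpa [dual] using Finsupp.mapDomain_apply neg_injective f.coeff (-w)

lemma charProd_dual [AddCommGroup M] (g : M → A) (f : AddMonoidAlgebra ℤ M) :
    charProd g (dual f) = charProd (fun w ↦ g (-w)) f :=
  Finsupp.prod_mapDomain_index_inj neg_injective

lemma charProd_sum_map_single (hg : ∀ w, g w ≠ 0) (s : Multiset M) :
    charProd g (s.map fun w ↦ AddMonoidAlgebra.single w (1 : ℤ)).sum = (s.map g).prod := by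
  induction s using Multiset.induction_on with
  | empty => simp [charProd]
  | cons w s ih =>
    rw [Multiset.map_cons, Multiset.map_cons, Multiset.sum_cons, Multiset.prod_cons,
      charProd_add hg, charProd_single, ih]

lemma coeff_sum_map_single [DecidableEq M] (s : Multiset M) (u : M) :
    (s.map fun w ↦ AddMonoidAlgebra.single w (1 : ℤ)).sum.coeff u = s.count u := by
  induction s using Multiset.induction_on with
  | empty => simp
  | cons w s ih =>
    simp [ih, Multiset.count_cons, Finsupp.single_apply, eq_comm, add_comm]

lemma HasValueAt.charProd {K : Type*} [Field K] {z : K} {G : M → RatFunc K} {v : M → K}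
    (hG : ∀ w, HasValueAt z (G w) (v w)) (hv : ∀ w, v w ≠ 0) (f : AddMonoidAlgebra ℤ M) :
    HasValueAt z (charProd G f) (charProd v f) :=
  .prod _ fun w _ ↦ (hG w).zpow (hv w) _

end MultiplicativeExtension

section LeadingCoefficients

variable {K : Type*} [Field K] [DecidableEq K]

/-- `w`, with the value `0` replaced by `1`: the lowest nonzero coefficient of the
polynomial `X + w`. -/
def orOne (w : K) : K := if w = 0 then 1 else w

lemma orOne_ne_zero (w : K) : orOne w ≠ 0 := by
  unfold orOne
  split_ifs with h
  exacts [one_ne_zero, h]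

lemma orOne_of_ne_zero {w : K} (hw : w ≠ 0) : orOne w = w := if_neg hw

lemma orOne_sub_comm (u w : K) :
    orOne (w - u) = -1 * (if w = u then -1 else 1) * orOne (u - w) := by
  split_ifs with h
  · simp [h]
  · rw [orOne_of_ne_zero (sub_ne_zero.mpr h), orOne_of_ne_zero (sub_ne_zero.mpr (Ne.symm h))]
    ring

lemma charProd_orOne_sub_comm (u : K) (f : AddMonoidAlgebra ℤ K) :
    charProd (fun w ↦ orOne (w - u)) f =
      charProd (fun _ ↦ (-1 : K)) f * (-1) ^ f.coeff u * charProd (fun w ↦ orOne (u - w)) f := by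
  simp only [orOne_sub_comm u, charProd_mul_fun, charProd_ite_eq]

lemma exists_charProd_X_add_C_sub_C (z s : K) (f : AddMonoidAlgebra ℤ K) :
    ∃ U, HasValueAt z U (charProd (fun w ↦ orOne (z + s - w)) f) ∧
      charProd (fun w ↦ RatFunc.X + RatFunc.C s - RatFunc.C w) f =
        (RatFunc.X - RatFunc.C z) ^ f.coeff (z + s) * U := by
  let G (w : K) : RatFunc K := if w = z + s then 1 else RatFunc.X + RatFunc.C s - RatFunc.C w
  have hG (w : K) : HasValueAt z (G w) (orOne (z + s - w)) := by
    by_cases hw : w = z + s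
    · simpa [G, hw, orOne] using HasValueAt.C z (1 : K)
    · rw [orOne_of_ne_zero (sub_ne_zero.mpr (Ne.symm hw))]
      simpa only [G, if_neg hw] using HasValueAt.X_add_C_sub_C z s w
  refine ⟨charProd G f, .charProd hG (fun _ ↦ orOne_ne_zero _) f, ?_⟩
  rw [← charProd_ite_eq, ← charProd_mul_fun]
  congr 1
  ext1 w
  by_cases hw : w = z + s <;> simp [G, hw]

lemma prod_eq_ite_prod_map_orOne (s : Multiset K) :
    s.prod = if s.count 0 = 0 then (s.map orOne).prod else 0 := by
  split_ifs with h
  · rw [Multiset.count_eq_zero] at h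
    rw [Multiset.map_congr rfl fun w hw ↦ orOne_of_ne_zero (ne_of_mem_of_not_mem hw h),
      Multiset.map_id']
  · exact Multiset.prod_eq_zero (Multiset.one_le_count_iff_mem.mp (Nat.one_le_iff_ne_zero.mpr h))

/-- If the difference `f` of the characters of `s` and `t` has no constant term, then `s` and `t`
contain `0` equally often, so that replacing `0` by `1` in `charProd orOne f` is harmless. -/
lemma prod_eq_prod_mul_charProd_orOne {s t : Multiset K} {f : AddMonoidAlgebra ℤ K}
    (h : (t.map fun w ↦ AddMonoidAlgebra.single w (1 : ℤ)).sum =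
      (s.map fun w ↦ AddMonoidAlgebra.single w (1 : ℤ)).sum + f)
    (hf : f.coeff 0 = 0) : t.prod = s.prod * charProd orOne f := by
  have hcount : t.count 0 = s.count 0 := by
    have := congrArg (fun F ↦ AddMonoidAlgebra.coeff F 0) h
    simpa [coeff_sum_map_single, hf] using this
  have hprod : (t.map orOne).prod = (s.map orOne).prod * charProd orOne f := by
    rw [← charProd_sum_map_single orOne_ne_zero, h, charProd_add orOne_ne_zero,
      charProd_sum_map_single orOne_ne_zero]
  rw [prod_eq_ite_prod_map_orOne, prod_eq_ite_prod_map_orOne s, hcount, hprod, ite_mul, zero_mul]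

end LeadingCoefficients

lemma charProd_X_add_C_sub_C_mem_regularAt {K : Type*} [Field K] {z s : K}
    {f : AddMonoidAlgebra ℤ K} (hf : 0 ≤ f.coeff (z + s)) :
    charProd (fun w ↦ RatFunc.X + RatFunc.C s - RatFunc.C w) f ∈ regularAt z := by
  classical
  obtain ⟨U, hU, h⟩ := exists_charProd_X_add_C_sub_C z s f
  have hX : RatFunc.X - RatFunc.C z ∈ regularAt z := by
    simpa using (HasValueAt.X_add_C_sub_C z 0 z).1
  lift f.coeff (z + s) to ℕ using hf with n
  rw [h, zpow_natCast]
  exact mul_mem (pow_mem hX n) hU.1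

section Characters

lemma eExp_mul_eExp (u v : ℂ) : eExp u * eExp v = eExp (u + v) := by
  simp [eExp]

lemma dual_eExp (u : ℂ) : dual (eExp u) = eExp (-u) :=
  dual_single u 1

lemma eExp_mul_eExp_neg (u : ℂ) : eExp u * eExp (-u) = 1 := by
  rw [eExp_mul_eExp, add_neg_cancel]
  rfl

variable {ι : Type*}

/-- The position `a_b + c(□)` of the box `□` of the `b`-th diagram. -/
def boxPos (ε₁ ε₂ : ℂ) (a : ι → ℂ) (x : Σ _ : ι, ℕ × ℕ) : ℂ :=
  a x.1 + content ε₁ ε₂ x.2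

variable [Fintype ι]

/-- The boxes of all the diagrams of a tuple, labelled by the index of their diagram. -/
def boxes (lam : ι → YoungDiagram) : Finset (Σ _ : ι, ℕ × ℕ) :=
  Finset.univ.sigma fun b ↦ (lam b).cells

lemma mk_mem_boxes {lam : ι → YoungDiagram} {b : ι} {c : ℕ × ℕ} :
    ⟨b, c⟩ ∈ boxes lam ↔ c ∈ lam b := by
  simp [boxes]

lemma boxes_injective : Function.Injective (boxes : (ι → YoungDiagram) → _) := by
  intro lam lam' h
  ext b c
  rw [YoungDiagram.mem_cells, YoungDiagram.mem_cells, ← mk_mem_boxes, h, mk_mem_boxes]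

/-- The framing character `W = ∑_b e^{a_b}`. -/
def frameChar (a : ι → ℂ) : AddMonoidAlgebra ℤ ℂ := ∑ b, eExp (a b)

/-- The character `K = ∑_b e^{a_b} χ_{λ^{(b)}}` of all boxes. -/
def boxChar (ε₁ ε₂ : ℂ) (a : ι → ℂ) (lam : ι → YoungDiagram) : AddMonoidAlgebra ℤ ℂ :=
  ∑ x ∈ boxes lam, eExp (boxPos ε₁ ε₂ a x)

/-- The character `S = W - (1 - e^{ε₁})(1 - e^{ε₂})K`, whose multiplicative extension is the
`Y`-observable. -/
def yChar (ε₁ ε₂ : ℂ) (a : ι → ℂ) (lam : ι → YoungDiagram) : AddMonoidAlgebra ℤ ℂ :=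
  frameChar a - (1 - eExp ε₁) * (1 - eExp ε₂) * boxChar ε₁ ε₂ a lam

variable (ε₁ ε₂ : ℂ) (a : ι → ℂ) (lam : ι → YoungDiagram)

lemma yChar_eq_sum : yChar ε₁ ε₂ a lam =
    ∑ b, eExp (a b) + ∑ x ∈ boxes lam,
      (eExp (boxPos ε₁ ε₂ a x + ε₁) + eExp (boxPos ε₁ ε₂ a x + ε₂) -
        (eExp (boxPos ε₁ ε₂ a x) + eExp (boxPos ε₁ ε₂ a x + (ε₁ + ε₂)))) := by
  rw [yChar, boxChar, frameChar, sub_eq_add_neg, Finset.mul_sum, ← Finset.sum_neg_distrib]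
  congr 1
  refine Finset.sum_congr rfl fun x _ ↦ ?_
  simp only [← eExp_mul_eExp]
  ring

lemma charProd_yChar {A : Type*} [CommGroupWithZero A] {g : ℂ → A} (hg : ∀ w, g w ≠ 0) :
    charProd g (yChar ε₁ ε₂ a lam) = (∏ b, g (a b)) * ∏ x ∈ boxes lam,
      (g (boxPos ε₁ ε₂ a x + ε₁) * g (boxPos ε₁ ε₂ a x + ε₂) /
        (g (boxPos ε₁ ε₂ a x) * g (boxPos ε₁ ε₂ a x + (ε₁ + ε₂)))) := by
  simp only [yChar_eq_sum, charProd_add hg, charProd_sub hg, charProd_sum hg, eExp,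
    charProd_single]

lemma charProd_neg_one_yChar :
    charProd (fun _ ↦ (-1 : ℂ)) (yChar ε₁ ε₂ a lam) = (-1) ^ Fintype.card ι := by
  simp [charProd_yChar]

end Characters

section InstantonCharacters

variable {N : ℕ} (ε₁ ε₂ : ℂ) (a : Fin N → ℂ) (lam : Fin N → YoungDiagram)

lemma Yobs_eq_charProd (s : ℂ) : Yobs N ε₁ ε₂ a s lam =
    charProd (fun w ↦ RatFunc.X + RatFunc.C s - RatFunc.C w) (yChar ε₁ ε₂ a lam) := by
  have hX (w : ℂ) : (RatFunc.X + RatFunc.C s - RatFunc.C w : RatFunc ℂ) ≠ 0 := by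
    convert X_sub_C_ne_zero (w - s) using 1
    rw [map_sub]
    ring
  rw [charProd_yChar _ _ _ _ hX, Yobs, Finset.prod_mul_distrib, boxes, Finset.prod_sigma]
  rfl

lemma totalCard_eq_card_boxes : totalCard N lam = (boxes lam).card :=
  (Finset.card_sigma ..).symm

lemma boxChar_eq_sum_chi : boxChar ε₁ ε₂ a lam = ∑ b, eExp (a b) * chi ε₁ ε₂ (lam b) := by
  simp only [boxChar, boxes, chi, boxPos, Finset.sum_sigma, Finset.mul_sum, eExp_mul_eExp]

lemma dual_boxChar_eq_sum_chiStar :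
    dual (boxChar ε₁ ε₂ a lam) = ∑ b, eExp (-a b) * chiStar ε₁ ε₂ (lam b) := by
  simp only [boxChar, boxes, chiStar, boxPos, Finset.sum_sigma, Finset.mul_sum, eExp_mul_eExp,
    map_sum, dual_eExp, neg_add]

lemma tangentChar_eq : tangentChar N ε₁ ε₂ a lam =
    frameChar a * dual (boxChar ε₁ ε₂ a lam) +
      eExp (ε₁ + ε₂) * dual (frameChar a) * boxChar ε₁ ε₂ a lam -
      (1 - eExp ε₁) * (1 - eExp ε₂) * boxChar ε₁ ε₂ a lam * dual (boxChar ε₁ ε₂ a lam) := by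
  have hK := boxChar_eq_sum_chi ε₁ ε₂ a lam
  have hK' := dual_boxChar_eq_sum_chiStar ε₁ ε₂ a lam
  have hWK : frameChar a * dual (boxChar ε₁ ε₂ a lam) =
      ∑ b, ∑ c, eExp (a b) * (eExp (-a c) * chiStar ε₁ ε₂ (lam c)) := by
    rw [hK', frameChar, Finset.sum_mul_sum]
  have hKW : dual (frameChar a) * boxChar ε₁ ε₂ a lam =
      ∑ b, ∑ c, eExp (-a c) * (eExp (a b) * chi ε₁ ε₂ (lam b)) := by
    rw [hK, frameChar, map_sum, Finset.sum_mul_sum, Finset.sum_comm]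
    simp only [dual_eExp]
  have hKK : boxChar ε₁ ε₂ a lam * dual (boxChar ε₁ ε₂ a lam) =
      ∑ b, ∑ c, eExp (a b) * chi ε₁ ε₂ (lam b) * (eExp (-a c) * chiStar ε₁ ε₂ (lam c)) := by
    rw [hK', hK, Finset.sum_mul_sum]
  rw [mul_assoc (eExp _), mul_assoc (_ * _), hWK, hKW, hKK, tangentChar]
  simp only [Finset.mul_sum, ← Finset.sum_add_distrib, ← Finset.sum_sub_distrib]
  refine Finset.sum_congr rfl fun b _ ↦ Finset.sum_congr rfl fun c _ ↦ ?_
  rw [sub_eq_add_neg (a b), ← eExp_mul_eExp (a b)]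
  ring

end InstantonCharacters

section AddingBoxes

variable {ι : Type*} [Fintype ι] [DecidableEq ι]

/-- The tuple `lam'` is obtained from `lam` by adding the single box `x`. -/
structure AddsBox (lam lam' : ι → YoungDiagram) (x : Σ _ : ι, ℕ × ℕ) : Prop where
  notMem : x ∉ boxes lam
  boxes_eq : boxes lam' = insert x (boxes lam)

namespace AddsBox

variable {lam lam' μ : ι → YoungDiagram} {x : Σ _ : ι, ℕ × ℕ}

lemma unique_right (h : AddsBox lam lam' x) (h' : AddsBox lam μ x) : lam' = μ :=
  boxes_injective (h.boxes_eq.trans h'.boxes_eq.symm)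

lemma unique_left (h : AddsBox lam lam' x) (h' : AddsBox μ lam' x) : lam = μ :=
  boxes_injective <| by
    rw [← Finset.erase_insert h.notMem, ← h.boxes_eq, h'.boxes_eq, Finset.erase_insert h'.notMem]

lemma totalCard_eq {N : ℕ} {lam lam' : Fin N → YoungDiagram} {x : Σ _ : Fin N, ℕ × ℕ}
    (h : AddsBox lam lam' x) : totalCard N lam' = totalCard N lam + 1 := by
  rw [totalCard_eq_card_boxes, totalCard_eq_card_boxes, h.boxes_eq,
    Finset.card_insert_of_notMem h.notMem]

lemma boxChar_eq (h : AddsBox lam lam' x) (ε₁ ε₂ : ℂ) (a : ι → ℂ) :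
    boxChar ε₁ ε₂ a lam' = eExp (boxPos ε₁ ε₂ a x) + boxChar ε₁ ε₂ a lam := by
  rw [boxChar, h.boxes_eq, Finset.sum_insert h.notMem, boxChar]

lemma tangentChar_eq_add {N : ℕ} {lam lam' : Fin N → YoungDiagram} {x : Σ _ : Fin N, ℕ × ℕ}
    (h : AddsBox lam lam' x) (ε₁ ε₂ : ℂ) (a : Fin N → ℂ) :
    tangentChar N ε₁ ε₂ a lam' = tangentChar N ε₁ ε₂ a lam +
      (eExp (-boxPos ε₁ ε₂ a x) * yChar ε₁ ε₂ a lam +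
        eExp (boxPos ε₁ ε₂ a x + (ε₁ + ε₂)) * dual (yChar ε₁ ε₂ a lam')) := by
  have hq : eExp ε₁ * eExp ε₂ * ((1 - eExp (-ε₁)) * (1 - eExp (-ε₂))) =
      (1 - eExp ε₁) * (1 - eExp ε₂) := by
    linear_combination (eExp ε₂ * eExp (-ε₂) - eExp ε₂) * eExp_mul_eExp_neg ε₁ +
      (1 - eExp ε₁) * eExp_mul_eExp_neg ε₂
  simp only [tangentChar_eq, yChar, map_sub, map_mul, map_add, map_one, dual_eExp,
    h.boxChar_eq, ← eExp_mul_eExp]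
  linear_combination eExp (boxPos ε₁ ε₂ a x) *
    (eExp (-boxPos ε₁ ε₂ a x) + dual (boxChar ε₁ ε₂ a lam)) * hq

end AddsBox

end AddingBoxes

section Corners

/-- The second difference `[p-(1,0) ∈ L] + [p-(0,1) ∈ L] - [p ∈ L] - [p-(1,1) ∈ L]` of the indicator
function of `L`; it vanishes except at the corners of the boundary of `L`. -/
def cornerSign (L : LowerSet (ℤ × ℤ)) (p : ℤ × ℤ) : ℤ :=
  L.carrier.indicator 1 (p - (1, 0)) + L.carrier.indicator 1 (p - (0, 1)) -
    L.carrier.indicator 1 p - L.carrier.indicator 1 (p - (1, 1))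

variable {L : LowerSet (ℤ × ℤ)} {p : ℤ × ℤ}

open Classical in
lemma cornerSign_eq_ite : cornerSign L p =
    if p ∉ L ∧ p - (1, 0) ∈ L ∧ p - (0, 1) ∈ L then 1
    else if p - (1, 1) ∈ L ∧ p - (1, 0) ∉ L ∧ p - (0, 1) ∉ L then -1 else 0 := by
  have h₁ : p ∈ L → p - (1, 0) ∈ L := L.lower (sub_le_self p (by decide))
  have h₂ : p ∈ L → p - (0, 1) ∈ L := L.lower (sub_le_self p (by decide))
  have h₃ : p - (1, 0) ∈ L → p - (1, 1) ∈ L := L.lower (sub_le_sub_left (by decide) p)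
  have h₄ : p - (0, 1) ∈ L → p - (1, 1) ∈ L := L.lower (sub_le_sub_left (by decide) p)
  simp only [cornerSign, Set.indicator_apply, LowerSet.carrier_eq_coe, SetLike.mem_coe,
    Pi.one_apply]
  grind

lemma cornerSign_pos_iff : 0 < cornerSign L p ↔ p ∉ L ∧ p - (1, 0) ∈ L ∧ p - (0, 1) ∈ L := by
  rw [cornerSign_eq_ite]
  grind

lemma cornerSign_neg_iff :
    cornerSign L p < 0 ↔ p - (1, 1) ∈ L ∧ p - (1, 0) ∉ L ∧ p - (0, 1) ∉ L := by
  rw [cornerSign_eq_ite]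
  grind

lemma cornerSign_le_one : cornerSign L p ≤ 1 := by
  rw [cornerSign_eq_ite]
  grind

lemma neg_one_le_cornerSign : -1 ≤ cornerSign L p := by
  rw [cornerSign_eq_ite]
  grind

end Corners

section YoungDiagrams

/-- A Young diagram together with the complement of the quadrant, as a lower set of `ℤ × ℤ`. -/
def extended (μ : YoungDiagram) : LowerSet (ℤ × ℤ) where
  carrier := {p | 0 ≤ p → (p.1.toNat, p.2.toNat) ∈ μ}
  lower' _ _ hqp hp hq :=
    μ.isLowerSet ⟨Int.toNat_le_toNat hqp.1, Int.toNat_le_toNat hqp.2⟩ (hp (hq.trans hqp))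

variable {μ : YoungDiagram} {p : ℤ × ℤ}

lemma mem_extended : p ∈ extended μ ↔ (0 ≤ p → (p.1.toNat, p.2.toNat) ∈ μ) := Iff.rfl

lemma natCast_mem_extended {c : ℕ × ℕ} : ((c.1, c.2) : ℤ × ℤ) ∈ extended μ ↔ c ∈ μ := by
  simp [mem_extended, Prod.le_def]

lemma exists_natCast_eq_of_nonneg (hp : 0 ≤ p) : ∃ c : ℕ × ℕ, ((c.1, c.2) : ℤ × ℤ) = p :=
  ⟨(p.1.toNat, p.2.toNat), Prod.ext (Int.toNat_of_nonneg hp.1) (Int.toNat_of_nonneg hp.2)⟩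

lemma nonneg_of_notMem_extended (hp : p ∉ extended μ) : 0 ≤ p :=
  (Classical.not_imp.mp hp).1

lemma cornerSign_extended_pos_iff : 0 < cornerSign (extended μ) p ↔
    ∃ c : ℕ × ℕ, ((c.1, c.2) : ℤ × ℤ) = p ∧ c ∉ μ ∧ ∀ d < c, d ∈ μ := by
  rw [cornerSign_pos_iff]
  constructor
  · rintro ⟨hp, h₁, h₂⟩
    obtain ⟨c, rfl⟩ := exists_natCast_eq_of_nonneg (nonneg_of_notMem_extended hp)
    refine ⟨c, rfl, mt natCast_mem_extended.mpr hp, fun d hd ↦ natCast_mem_extended.mp ?_⟩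
    obtain hd | hd := Prod.lt_iff.mp hd
    · exact (extended μ).lower (Prod.mk_le_mk.mpr ⟨by omega, by omega⟩) h₁
    · exact (extended μ).lower (Prod.mk_le_mk.mpr ⟨by omega, by omega⟩) h₂
  · rintro ⟨c, rfl, hc, hlt⟩
    refine ⟨mt natCast_mem_extended.mp hc, fun h ↦ hlt _ ?_, fun h ↦ hlt _ ?_⟩ <;>
    · simp only [Prod.le_def, Prod.lt_iff, Prod.fst_sub, Prod.snd_sub, Prod.fst_zero,
        Prod.snd_zero] at h ⊢
      omega

lemma cornerSign_extended_neg_iff : cornerSign (extended μ) p < 0 ↔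
    ∃ c : ℕ × ℕ, ((c.1, c.2) : ℤ × ℤ) + (1, 1) = p ∧ c ∈ μ ∧ ∀ d > c, d ∉ μ := by
  rw [cornerSign_neg_iff]
  constructor
  · rintro ⟨hp, h₁, h₂⟩
    obtain ⟨c, hc⟩ : ∃ c : ℕ × ℕ, ((c.1, c.2) : ℤ × ℤ) = p - (1, 1) := by
      have h₁' := nonneg_of_notMem_extended h₁
      have h₂' := nonneg_of_notMem_extended h₂
      refine exists_natCast_eq_of_nonneg ?_
      simp only [Prod.le_def, Prod.fst_sub, Prod.snd_sub, Prod.fst_zero, Prod.snd_zero]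
        at h₁' h₂' ⊢
      omega
    obtain rfl := eq_add_of_sub_eq hc.symm
    refine ⟨c, rfl, natCast_mem_extended.mp (hc ▸ hp), fun d hd hdμ ↦ ?_⟩
    rw [← natCast_mem_extended] at hdμ
    obtain hd | hd := Prod.lt_iff.mp hd
    · exact h₂ ((extended μ).lower (Prod.mk_le_mk.mpr ⟨by simp; omega, by simp; omega⟩) hdμ)
    · exact h₁ ((extended μ).lower (Prod.mk_le_mk.mpr ⟨by simp; omega, by simp; omega⟩) hdμ)
  · rintro ⟨c, rfl, hc, hgt⟩
    refine ⟨by simpa using natCast_mem_extended.mpr hc, fun h ↦ hgt _ ?_ (h ?_),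
      fun h ↦ hgt _ ?_ (h ?_)⟩ <;>
    · simp only [Prod.le_def, gt_iff_lt, Prod.lt_iff, Prod.fst_sub, Prod.snd_sub, Prod.fst_add,
        Prod.snd_add, Prod.fst_zero, Prod.snd_zero]
      omega

end YoungDiagrams

section Genericity

variable {ι : Type*}

/-- The genericity condition: `a_b - a_c + i ε₁ + j ε₂` vanishes only trivially. -/
def IsGeneric (ε₁ ε₂ : ℂ) (a : ι → ℂ) : Prop :=
  ∀ b c : ι, ∀ i j : ℤ, a b - a c + (i : ℂ) * ε₁ + (j : ℂ) * ε₂ = 0 → b = c ∧ i = 0 ∧ j = 0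

/-- The point `a_b + i ε₁ + j ε₂` for `p = (i, j)`. -/
def latticePoint (ε₁ ε₂ : ℂ) (a : ι → ℂ) (b : ι) (p : ℤ × ℤ) : ℂ :=
  a b + p.1 * ε₁ + p.2 * ε₂

variable {ε₁ ε₂ : ℂ} {a : ι → ℂ} {b c : ι} {p q : ℤ × ℤ}

lemma latticePoint_sub (i j : ℤ) : latticePoint ε₁ ε₂ a b (p - (i, j)) =
    latticePoint ε₁ ε₂ a b p - (i * ε₁ + j * ε₂) := by
  simp only [latticePoint, Prod.fst_sub, Prod.snd_sub, Int.cast_sub]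
  ring

lemma latticePoint_add_one_one : latticePoint ε₁ ε₂ a b p + (ε₁ + ε₂) =
    latticePoint ε₁ ε₂ a b (p + (1, 1)) := by
  simp only [latticePoint, Prod.fst_add, Prod.snd_add, Int.cast_add, Int.cast_one]
  ring

lemma boxPos_mk (c : ℕ × ℕ) : boxPos ε₁ ε₂ a ⟨b, c⟩ = latticePoint ε₁ ε₂ a b (c.1, c.2) := by
  simp [boxPos, content, latticePoint, add_assoc]

lemma latticePoint_zero : latticePoint ε₁ ε₂ a b 0 = a b := by
  simp [latticePoint]

lemma IsGeneric.latticePoint_inj (h : IsGeneric ε₁ ε₂ a) :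
    latticePoint ε₁ ε₂ a b p = latticePoint ε₁ ε₂ a c q ↔ b = c ∧ p = q := by
  refine ⟨fun hpq ↦ ?_, by rintro ⟨rfl, rfl⟩; rfl⟩
  obtain ⟨hb, h₁, h₂⟩ := h b c (p.1 - q.1) (p.2 - q.2) <| by
    simp only [latticePoint] at hpq
    push_cast
    linear_combination hpq
  exact ⟨hb, Prod.ext (sub_eq_zero.mp h₁) (sub_eq_zero.mp h₂)⟩

lemma IsGeneric.boxPos_injective (h : IsGeneric ε₁ ε₂ a) :
    Function.Injective (boxPos ε₁ ε₂ a) := by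
  rintro ⟨b, i, j⟩ ⟨c, i', j'⟩ hbc
  simpa [boxPos_mk, h.latticePoint_inj] using hbc

end Genericity

section Coefficients

variable {ι : Type*} [Fintype ι] {ε₁ ε₂ : ℂ} {a : ι → ℂ} {lam : ι → YoungDiagram}
  {b : ι} {p : ℤ × ℤ} {z : ℂ}

lemma coeff_yChar (z : ℂ) : (yChar ε₁ ε₂ a lam).coeff z =
    (frameChar a).coeff z - ((boxChar ε₁ ε₂ a lam).coeff z -
      (boxChar ε₁ ε₂ a lam).coeff (z - ε₁) - (boxChar ε₁ ε₂ a lam).coeff (z - ε₂) +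
      (boxChar ε₁ ε₂ a lam).coeff (z - (ε₁ + ε₂))) := by
  have h : yChar ε₁ ε₂ a lam = frameChar a - (boxChar ε₁ ε₂ a lam -
      eExp ε₁ * boxChar ε₁ ε₂ a lam - eExp ε₂ * boxChar ε₁ ε₂ a lam +
      eExp (ε₁ + ε₂) * boxChar ε₁ ε₂ a lam) := by
    rw [yChar, ← eExp_mul_eExp]
    ring
  simp only [h, eExp, AddMonoidAlgebra.coeff_sub, AddMonoidAlgebra.coeff_add,
    AddMonoidAlgebra.coeff_single_mul_apply, Finsupp.sub_apply, Finsupp.add_apply, one_mul,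
    neg_add_eq_sub]

lemma exists_latticePoint_of_coeff_frameChar_ne_zero (h : (frameChar a).coeff z ≠ 0) :
    ∃ b p, latticePoint ε₁ ε₂ a b p = z := by
  rw [frameChar, AddMonoidAlgebra.coeff_sum, Finsupp.finsetSum_apply] at h
  obtain ⟨b, -, hb⟩ := Finset.exists_ne_zero_of_sum_ne_zero h
  exact ⟨b, 0, by simpa [eExp, Finsupp.single_apply, latticePoint_zero] using hb⟩

lemma exists_boxPos_of_coeff_boxChar_ne_zero (h : (boxChar ε₁ ε₂ a lam).coeff z ≠ 0) :
    ∃ x ∈ boxes lam, boxPos ε₁ ε₂ a x = z := by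
  rw [boxChar, AddMonoidAlgebra.coeff_sum, Finsupp.finsetSum_apply] at h
  obtain ⟨x, hx, hxz⟩ := Finset.exists_ne_zero_of_sum_ne_zero h
  exact ⟨x, hx, by simpa [eExp, Finsupp.single_apply] using hxz⟩

lemma exists_latticePoint_of_coeff_yChar_ne_zero (h : (yChar ε₁ ε₂ a lam).coeff z ≠ 0) :
    ∃ b p, latticePoint ε₁ ε₂ a b p = z := by
  by_contra! hz
  have hframe : (frameChar a).coeff z = 0 := by
    by_contra h'
    obtain ⟨b, p, hp⟩ := exists_latticePoint_of_coeff_frameChar_ne_zero h'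
    exact hz b p hp
  have hbox (i j : ℤ) : (boxChar ε₁ ε₂ a lam).coeff (z - (i * ε₁ + j * ε₂)) = 0 := by
    by_contra h'
    obtain ⟨⟨b, c⟩, -, hx⟩ := exists_boxPos_of_coeff_boxChar_ne_zero h'
    apply hz b (((c.1, c.2) : ℤ × ℤ) - (-i, -j))
    rw [latticePoint_sub, ← boxPos_mk, hx]
    push_cast
    ring
  have h₀₀ := hbox 0 0
  have h₁₀ := hbox 1 0
  have h₀₁ := hbox 0 1
  have h₁₁ := hbox 1 1
  simp only [Int.cast_one, Int.cast_zero, one_mul, zero_mul, add_zero, zero_add, sub_zero]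
    at h₀₀ h₁₀ h₀₁ h₁₁
  simp [coeff_yChar, hframe, h₀₀, h₁₀, h₀₁, h₁₁] at h

lemma coeff_frameChar_latticePoint (h : IsGeneric ε₁ ε₂ a) :
    (frameChar a).coeff (latticePoint ε₁ ε₂ a b p) = if p = 0 then 1 else 0 := by
  classical
  have hiff (c : ι) : a c = latticePoint ε₁ ε₂ a b p ↔ c = b ∧ p = 0 := by
    rw [← latticePoint_zero (ε₁ := ε₁) (ε₂ := ε₂) (a := a), h.latticePoint_inj, eq_comm (a := 0)]
  simp [frameChar, eExp, Finsupp.single_apply, hiff, ite_and]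

open Classical in
lemma coeff_boxChar_latticePoint (h : IsGeneric ε₁ ε₂ a) :
    (boxChar ε₁ ε₂ a lam).coeff (latticePoint ε₁ ε₂ a b p) =
      if 0 ≤ p ∧ p ∈ extended (lam b) then 1 else 0 := by
  by_cases hp : 0 ≤ p
  · obtain ⟨c, rfl⟩ := exists_natCast_eq_of_nonneg hp
    rw [← boxPos_mk]
    simp [boxChar, eExp, Finsupp.single_apply, h.boxPos_injective.eq_iff, natCast_mem_extended, hp,
      mk_mem_boxes]
  · simp only [hp, false_and, if_false]
    by_contra h'
    obtain ⟨⟨b', c⟩, -, hx⟩ := exists_boxPos_of_coeff_boxChar_ne_zero h'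
    rw [boxPos_mk, h.latticePoint_inj] at hx
    exact hp (hx.2 ▸ ⟨Int.natCast_nonneg _, Int.natCast_nonneg _⟩)

lemma coeff_yChar_latticePoint (h : IsGeneric ε₁ ε₂ a) :
    (yChar ε₁ ε₂ a lam).coeff (latticePoint ε₁ ε₂ a b p) = cornerSign (extended (lam b)) p := by
  classical
  have h₁ := latticePoint_sub (ε₁ := ε₁) (ε₂ := ε₂) (a := a) (b := b) (p := p) 1 0
  have h₂ := latticePoint_sub (ε₁ := ε₁) (ε₂ := ε₂) (a := a) (b := b) (p := p) 0 1
  have h₃ := latticePoint_sub (ε₁ := ε₁) (ε₂ := ε₂) (a := a) (b := b) (p := p) 1 1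
  simp only [Int.cast_one, Int.cast_zero, one_mul, zero_mul, add_zero, zero_add] at h₁ h₂ h₃
  rw [coeff_yChar, ← h₁, ← h₂, ← h₃]
  have houtside (q : ℤ × ℤ) : ¬ 0 ≤ q → q ∈ extended (lam b) := fun hq hq' ↦ absurd hq' hq
  have hmem := houtside p
  have hmem₁ := houtside (p - (1, 0))
  have hmem₂ := houtside (p - (0, 1))
  have hmem₃ := houtside (p - (1, 1))
  simp only [coeff_frameChar_latticePoint h, coeff_boxChar_latticePoint h, cornerSign,
    Set.indicator_apply, LowerSet.carrier_eq_coe, SetLike.mem_coe, Pi.one_apply]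
  simp only [Prod.le_def, Prod.ext_iff, Prod.fst_sub, Prod.snd_sub, Prod.fst_zero,
    Prod.snd_zero] at hmem hmem₁ hmem₂ hmem₃ ⊢
  grind

end Coefficients

section AddableBoxes

variable {ι : Type*} [Fintype ι]

lemma exists_boxes_eq (s : Finset (Σ _ : ι, ℕ × ℕ))
    (hs : ∀ b c d, c ≤ d → (⟨b, d⟩ : Σ _ : ι, ℕ × ℕ) ∈ s → ⟨b, c⟩ ∈ s) :
    ∃ lam : ι → YoungDiagram, boxes lam = s := by
  refine ⟨fun b ↦ ⟨s.preimage (Sigma.mk (β := fun _ ↦ ℕ × ℕ) b) sigma_mk_injective.injOn,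
    fun d c hcd hd ↦ ?_⟩, ?_⟩
  · simpa using hs b c d hcd (by simpa using hd)
  · ext ⟨b, c⟩
    simp [mk_mem_boxes, ← YoungDiagram.mem_cells]

lemma mk_mem_boxes_of_le {lam : ι → YoungDiagram} {b : ι} {c d : ℕ × ℕ} (hcd : c ≤ d)
    (hd : ⟨b, d⟩ ∈ boxes lam) : ⟨b, c⟩ ∈ boxes lam :=
  mk_mem_boxes.mpr ((lam b).isLowerSet hcd (mk_mem_boxes.mp hd))

variable [DecidableEq ι] {lam lam' : ι → YoungDiagram} {b : ι} {c : ℕ × ℕ}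
  {x : Σ _ : ι, ℕ × ℕ}

lemma exists_addsBox_of_forall_lt (hc : c ∉ lam b) (hlt : ∀ d < c, d ∈ lam b) :
    ∃ lam', AddsBox lam lam' ⟨b, c⟩ := by
  obtain ⟨lam', h⟩ := exists_boxes_eq (insert ⟨b, c⟩ (boxes lam)) fun b' d' d hd hd' ↦ by
    rw [Finset.mem_insert, Sigma.mk.injEq, heq_eq_eq] at hd'
    obtain ⟨rfl, rfl⟩ | hd' := hd'
    · obtain rfl | hlt' := hd.eq_or_lt
      · exact Finset.mem_insert_self _ _
      · exact Finset.mem_insert_of_mem (mk_mem_boxes.mpr (hlt _ hlt'))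
    · exact Finset.mem_insert_of_mem (mk_mem_boxes_of_le hd hd')
  exact ⟨lam', mt mk_mem_boxes.mp hc, h⟩

lemma exists_addsBox_of_forall_gt (hc : c ∈ lam' b) (hgt : ∀ d > c, d ∉ lam' b) :
    ∃ lam, AddsBox lam lam' ⟨b, c⟩ := by
  obtain ⟨lam, h⟩ := exists_boxes_eq ((boxes lam').erase ⟨b, c⟩) fun b' d' d hd hd' ↦ by
    obtain ⟨hne, hd'⟩ := Finset.mem_erase.mp hd'
    refine Finset.mem_erase.mpr ⟨?_, mk_mem_boxes_of_le hd hd'⟩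
    rintro ⟨⟩
    obtain rfl | hlt := hd.eq_or_lt
    · exact hne rfl
    · exact hgt d hlt (mk_mem_boxes.mp hd')
  refine ⟨lam, ?_, ?_⟩
  · simp [h]
  · rw [h, Finset.insert_erase (mk_mem_boxes.mpr hc)]

namespace AddsBox

lemma mem_right (h : AddsBox lam lam' x) : x ∈ boxes lam' :=
  h.boxes_eq ▸ Finset.mem_insert_self _ _

lemma forall_lt_mem (h : AddsBox lam lam' ⟨b, c⟩) : ∀ d < c, d ∈ lam b := by
  intro d hd
  have hd' := mk_mem_boxes_of_le hd.le h.mem_right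
  rw [h.boxes_eq, Finset.mem_insert, Sigma.mk.injEq, heq_eq_eq] at hd'
  exact mk_mem_boxes.mp (hd'.resolve_left fun hdc ↦ hd.ne hdc.2)

lemma forall_gt_notMem (h : AddsBox lam lam' ⟨b, c⟩) : ∀ d > c, d ∉ lam' b := by
  intro d hd hdμ
  have hd' : (⟨b, d⟩ : Σ _ : ι, ℕ × ℕ) ∈ boxes lam' := mk_mem_boxes.mpr hdμ
  rw [h.boxes_eq, Finset.mem_insert, Sigma.mk.injEq, heq_eq_eq] at hd'
  exact h.notMem (mk_mem_boxes_of_le hd.le (hd'.resolve_left fun hdc ↦ hd.ne' hdc.2))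

variable {ε₁ ε₂ : ℂ} {a : ι → ℂ}

lemma coeff_yChar_left (h : AddsBox lam lam' x) (hgen : IsGeneric ε₁ ε₂ a) :
    (yChar ε₁ ε₂ a lam).coeff (boxPos ε₁ ε₂ a x) = 1 := by
  obtain ⟨b, c⟩ := x
  rw [boxPos_mk, coeff_yChar_latticePoint hgen]
  exact le_antisymm cornerSign_le_one <| cornerSign_extended_pos_iff.mpr
    ⟨c, rfl, mt mk_mem_boxes.mpr h.notMem, h.forall_lt_mem⟩

lemma coeff_yChar_right (h : AddsBox lam lam' x) (hgen : IsGeneric ε₁ ε₂ a) :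
    (yChar ε₁ ε₂ a lam').coeff (boxPos ε₁ ε₂ a x + (ε₁ + ε₂)) = -1 := by
  obtain ⟨b, c⟩ := x
  rw [boxPos_mk, latticePoint_add_one_one, coeff_yChar_latticePoint hgen]
  exact le_antisymm (Int.le_sub_one_of_lt <| cornerSign_extended_neg_iff.mpr
    ⟨c, rfl, mk_mem_boxes.mp h.mem_right, h.forall_gt_notMem⟩) neg_one_le_cornerSign

end AddsBox

variable {ε₁ ε₂ : ℂ} {a : ι → ℂ} {z : ℂ}

lemma exists_addsBox_of_coeff_pos (hgen : IsGeneric ε₁ ε₂ a)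
    (h : 0 < (yChar ε₁ ε₂ a lam).coeff z) :
    ∃ lam' x, AddsBox lam lam' x ∧ boxPos ε₁ ε₂ a x = z := by
  obtain ⟨b, p, rfl⟩ := exists_latticePoint_of_coeff_yChar_ne_zero h.ne'
  rw [coeff_yChar_latticePoint hgen, cornerSign_extended_pos_iff] at h
  obtain ⟨c, rfl, hc, hlt⟩ := h
  obtain ⟨lam', h⟩ := exists_addsBox_of_forall_lt hc hlt
  exact ⟨lam', _, h, boxPos_mk c⟩

lemma exists_addsBox_of_coeff_neg (hgen : IsGeneric ε₁ ε₂ a)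
    (h : (yChar ε₁ ε₂ a lam').coeff (z + (ε₁ + ε₂)) < 0) :
    ∃ lam x, AddsBox lam lam' x ∧ boxPos ε₁ ε₂ a x = z := by
  obtain ⟨b, p, hp⟩ := exists_latticePoint_of_coeff_yChar_ne_zero h.ne
  rw [← hp, coeff_yChar_latticePoint hgen, cornerSign_extended_neg_iff] at h
  obtain ⟨c, rfl, hc, hgt⟩ := h
  obtain ⟨lam, h⟩ := exists_addsBox_of_forall_gt hc hgt
  exact ⟨lam, _, h, by rwa [← latticePoint_add_one_one, add_left_inj, ← boxPos_mk] at hp⟩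

end AddableBoxes

section Weights

variable {N : ℕ} {lam lam' : Fin N → YoungDiagram} {x : Σ _ : Fin N, ℕ × ℕ} {ε₁ ε₂ : ℂ}
  {a : Fin N → ℂ} {T : (Fin N → YoungDiagram) → Multiset ℂ}

lemma muHat_eq (m : Fin (2 * N) → ℂ) : muHat N ε₁ ε₂ a m T lam =
    (-1) ^ (N * (boxes lam).card) * (∏ x ∈ boxes lam, ∏ f, (boxPos ε₁ ε₂ a x - m f)) /
      (T lam).prod := by
  rw [muHat, totalCard_eq_card_boxes, boxes, Finset.prod_sigma]
  rfl

namespace AddsBox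

lemma prod_tangentWeights_eq (h : AddsBox lam lam' x) (hgen : IsGeneric ε₁ ε₂ a)
    (hT : ∀ lam : Fin N → YoungDiagram,
      ((T lam).map fun w ↦ AddMonoidAlgebra.single w (1 : ℤ)).sum = tangentChar N ε₁ ε₂ a lam) :
    (T lam').prod = (T lam).prod * (-(-1) ^ N *
      charProd (fun w ↦ orOne (boxPos ε₁ ε₂ a x - w)) (yChar ε₁ ε₂ a lam) *
      charProd (fun w ↦ orOne (boxPos ε₁ ε₂ a x + (ε₁ + ε₂) - w)) (yChar ε₁ ε₂ a lam')) := by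
  have hchar := h.tangentChar_eq_add ε₁ ε₂ a
  rw [← hT, ← hT] at hchar
  have hconst : (eExp (-boxPos ε₁ ε₂ a x) * yChar ε₁ ε₂ a lam +
      eExp (boxPos ε₁ ε₂ a x + (ε₁ + ε₂)) * dual (yChar ε₁ ε₂ a lam')).coeff 0 = 0 := by
    simp [-neg_add_rev, eExp, coeff_dual, h.coeff_yChar_left hgen, h.coeff_yChar_right hgen]
  rw [prod_eq_prod_mul_charProd_orOne hchar hconst, charProd_add orOne_ne_zero, eExp, eExp,
    charProd_single_mul, charProd_single_mul, charProd_dual]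
  simp only [neg_add_eq_sub, ← sub_eq_add_neg]
  rw [charProd_orOne_sub_comm, charProd_neg_one_yChar, h.coeff_yChar_left hgen, Fintype.card_fin]
  ring

lemma muHat_add_muHat_eq_zero (h : AddsBox lam lam' x) (hgen : IsGeneric ε₁ ε₂ a)
    (m : Fin (2 * N) → ℂ)
    (hT : ∀ lam : Fin N → YoungDiagram,
      ((T lam).map fun w ↦ AddMonoidAlgebra.single w (1 : ℤ)).sum = tangentChar N ε₁ ε₂ a lam) :
    muHat N ε₁ ε₂ a m T lam' *
        charProd (fun w ↦ orOne (boxPos ε₁ ε₂ a x + (ε₁ + ε₂) - w)) (yChar ε₁ ε₂ a lam') +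
      muHat N ε₁ ε₂ a m T lam * ((∏ f, (boxPos ε₁ ε₂ a x - m f)) *
        (charProd (fun w ↦ orOne (boxPos ε₁ ε₂ a x - w)) (yChar ε₁ ε₂ a lam))⁻¹) = 0 := by
  rw [muHat_eq, muHat_eq, h.prod_tangentWeights_eq hgen hT, h.boxes_eq,
    Finset.card_insert_of_notMem h.notMem, Finset.prod_insert h.notMem, mul_add_one, pow_add]
  have hA : charProd (fun w ↦ orOne (boxPos ε₁ ε₂ a x + (ε₁ + ε₂) - w)) (yChar ε₁ ε₂ a lam') ≠ 0 :=
    charProd_ne_zero fun _ ↦ orOne_ne_zero _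
  have hB : charProd (fun w ↦ orOne (boxPos ε₁ ε₂ a x - w)) (yChar ε₁ ε₂ a lam) ≠ 0 :=
    charProd_ne_zero fun _ ↦ orOne_ne_zero _
  obtain h₀ | h₀ := eq_or_ne (T lam).prod 0
  · simp [h₀]
  · field_simp
    ring

end AddsBox

end Weights

section Poles

variable {N : ℕ} {lam lam' : Fin N → YoungDiagram} {x : Σ _ : Fin N, ℕ × ℕ} {ε₁ ε₂ z : ℂ}
  {a : Fin N → ℂ} {T : (Fin N → YoungDiagram) → Multiset ℂ}

lemma hasValueAt_Pmat (m : Fin (2 * N) → ℂ) (z : ℂ) :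
    HasValueAt z (Pmat N m 0) (∏ f, (z - m f)) := by
  simpa [Pmat] using HasValueAt.prod Finset.univ fun f _ ↦ HasValueAt.X_add_C_sub_C z 0 (m f)

lemma Yobs_mem_regularAt (hgen : IsGeneric ε₁ ε₂ a)
    (h : ∀ lam x, AddsBox lam lam' x → boxPos ε₁ ε₂ a x ≠ z) :
    Yobs N ε₁ ε₂ a (ε₁ + ε₂) lam' ∈ regularAt z := by
  rw [Yobs_eq_charProd]
  refine charProd_X_add_C_sub_C_mem_regularAt (not_lt.mp fun hneg ↦ ?_)
  obtain ⟨lam, x, hadd, hx⟩ := exists_addsBox_of_coeff_neg hgen hneg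
  exact h lam x hadd hx

lemma Pmat_div_Yobs_mem_regularAt (hgen : IsGeneric ε₁ ε₂ a) (m : Fin (2 * N) → ℂ)
    (h : ∀ lam' x, AddsBox lam lam' x → boxPos ε₁ ε₂ a x ≠ z) :
    Pmat N m 0 / Yobs N ε₁ ε₂ a 0 lam ∈ regularAt z := by
  rw [div_eq_mul_inv, Yobs_eq_charProd, ← charProd_neg]
  refine mul_mem (hasValueAt_Pmat m z).1 (charProd_X_add_C_sub_C_mem_regularAt ?_)
  rw [AddMonoidAlgebra.coeff_neg, Finsupp.neg_apply, neg_nonneg, add_zero]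
  refine not_lt.mp fun hpos ↦ ?_
  obtain ⟨lam', x, hadd, hx⟩ := exists_addsBox_of_coeff_pos hgen hpos
  exact h lam' x hadd hx

lemma AddsBox.add_mem_regularAt (h : AddsBox lam lam' x) (hgen : IsGeneric ε₁ ε₂ a)
    (m : Fin (2 * N) → ℂ)
    (hT : ∀ lam : Fin N → YoungDiagram,
      ((T lam).map fun w ↦ AddMonoidAlgebra.single w (1 : ℤ)).sum = tangentChar N ε₁ ε₂ a lam) :
    RatFunc.C (muHat N ε₁ ε₂ a m T lam') * Yobs N ε₁ ε₂ a (ε₁ + ε₂) lam' +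
      RatFunc.C (muHat N ε₁ ε₂ a m T lam) * (Pmat N m 0 / Yobs N ε₁ ε₂ a 0 lam) ∈
        regularAt (boxPos ε₁ ε₂ a x) := by
  obtain ⟨U, hU, hYU⟩ := exists_charProd_X_add_C_sub_C (boxPos ε₁ ε₂ a x) (ε₁ + ε₂)
    (yChar ε₁ ε₂ a lam')
  obtain ⟨V, hV, hYV⟩ := exists_charProd_X_add_C_sub_C (boxPos ε₁ ε₂ a x) 0 (yChar ε₁ ε₂ a lam)
  rw [← Yobs_eq_charProd, h.coeff_yChar_right hgen, zpow_neg_one] at hYU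
  rw [← Yobs_eq_charProd, add_zero, h.coeff_yChar_left hgen, zpow_one] at hYV
  rw [add_zero] at hV
  refine add_mem_regularAt_of_residues (by rw [hYU, mul_left_comm])
    (by rw [hYV, div_eq_mul_inv, mul_inv, mul_left_comm (Pmat N m 0), mul_left_comm])
    ((HasValueAt.C _ _).mul hU)
    ((HasValueAt.C _ _).mul <| (hasValueAt_Pmat m _).mul <|
      hV.inv (charProd_ne_zero fun _ ↦ orOne_ne_zero _))
    (h.muHat_add_muHat_eq_zero hgen m hT)

lemma IsGeneric.biUnique_addsBox (hgen : IsGeneric ε₁ ε₂ a) (z : ℂ) :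
    Relator.BiUnique fun lam' lam ↦ ∃ x, AddsBox lam lam' x ∧ boxPos ε₁ ε₂ a x = z := by
  refine ⟨?_, ?_⟩
  · rintro lam' mu' lam ⟨x, h, hx⟩ ⟨y, h', hy⟩
    obtain rfl := hgen.boxPos_injective (hx.trans hy.symm)
    exact h.unique_right h'
  · rintro lam' lam mu ⟨x, h, hx⟩ ⟨y, h', hy⟩
    obtain rfl := hgen.boxPos_injective (hx.trans hy.symm)
    exact h.unique_left h'

end Poles

section Summation

lemma sum_add_sum_mem_of_biUnique {α β M S : Type*} [AddCommMonoid M] [SetLike S M]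
    [AddSubmonoidClass S M] {H : S} {R : α → β → Prop} (hR : Relator.BiUnique R) {s : Finset α}
    {t : Finset β} {f : α → M} {g : β → M} (hf : ∀ a ∈ s, (∀ b ∈ t, ¬ R a b) → f a ∈ H)
    (hg : ∀ b ∈ t, (∀ a ∈ s, ¬ R a b) → g b ∈ H)
    (hfg : ∀ a ∈ s, ∀ b ∈ t, R a b → f a + g b ∈ H) :
    ∑ a ∈ s, f a + ∑ b ∈ t, g b ∈ H := by
  classical
  induction s using Finset.cons_induction generalizing t with
  | empty => simpa using sum_mem fun b hb ↦ hg b hb (by simp)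
  | cons a s ha ih =>
    simp only [Finset.forall_mem_cons] at hf hg hfg
    rw [Finset.sum_cons]
    by_cases hmatch : ∃ b ∈ t, R a b
    · obtain ⟨b, hb, hab⟩ := hmatch
      rw [← Finset.add_sum_erase t g hb, add_add_add_comm]
      refine add_mem (hfg.1 b hb hab) (ih (fun a' ha' h ↦ hf.2 a' ha' fun b' hb' hab' ↦ ?_)
        (fun b' hb' h ↦ ?_) fun a' ha' b' hb' ↦ hfg.2 a' ha' b' (Finset.mem_of_mem_erase hb'))
      · refine h b' (Finset.mem_erase.mpr ⟨?_, hb'⟩) hab'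
        rintro rfl
        exact ha (hR.1 hab hab' ▸ ha')
      · obtain ⟨hne, hb'⟩ := Finset.mem_erase.mp hb'
        exact hg b' hb' ⟨fun hab' ↦ hne (hR.2 hab' hab), h⟩
    · push Not at hmatch
      rw [add_assoc]
      exact add_mem (hf.1 hmatch) (ih hf.2 (fun b hb h ↦ hg b hb ⟨hmatch b hb, h⟩) hfg.2)

lemma succ_mul_succ_le_card_of_mem {μ : YoungDiagram} {c : ℕ × ℕ} (hc : c ∈ μ) :
    (c.1 + 1) * (c.2 + 1) ≤ μ.card := by
  have hsub : Finset.Iic c ⊆ μ.cells := fun d hd ↦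
    μ.isLowerSet (Finset.mem_Iic.mp hd) hc
  simpa [Finset.card_Iic_prod] using Finset.card_le_card hsub

lemma finite_setOf_totalCard_eq (N k : ℕ) :
    {lam : Fin N → YoungDiagram | totalCard N lam = k}.Finite := by
  let s : Finset (Σ _ : Fin N, ℕ × ℕ) :=
    Finset.univ.sigma fun _ ↦ Finset.range k ×ˢ Finset.range k
  refine (s.powerset.finite_toSet.preimage boxes_injective.injOn).subset ?_
  rintro lam rfl
  refine Finset.mem_powerset.mpr fun ⟨b, c⟩ hc ↦ ?_
  have hle : (c.1 + 1) * (c.2 + 1) ≤ totalCard N lam :=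
    (succ_mul_succ_le_card_of_mem (mk_mem_boxes.mp hc)).trans <|
      Finset.single_le_sum (f := fun b ↦ (lam b).card) (fun _ _ ↦ Nat.zero_le _)
        (Finset.mem_univ b)
  simp only [s, Finset.mem_sigma, Finset.mem_univ, Finset.mem_product, Finset.mem_range, true_and]
  constructor <;> nlinarith

end Summation

/-- Regularity of the averaged fundamental qq-character: coefficientwise in the
instanton counting parameter, the average of `𝒳(x) = Y(x+ε) + 𝔮·P(x)/Y(x)` against
the instanton pseudo-measure has no poles in `x`. -/
theorem averaged_qq_character_regular (N : ℕ) (hN : 1 ≤ N) (ε₁ ε₂ : ℂ) (a : Fin N → ℂ)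
    (hgen : ∀ b c : Fin N, ∀ i j : ℤ,
      a b - a c + (i : ℂ) * ε₁ + (j : ℂ) * ε₂ = 0 → b = c ∧ i = 0 ∧ j = 0)
    (m : Fin (2 * N) → ℂ)
    (T : (Fin N → YoungDiagram) → Multiset ℂ)
    (hT : ∀ lam : Fin N → YoungDiagram,
      ((T lam).map fun w => AddMonoidAlgebra.single w (1 : ℤ)).sum = tangentChar N ε₁ ε₂ a lam)
    (k : ℕ) (hk : 1 ≤ k) :
    ∃ p : Polynomial ℂ,
      (∑ᶠ lam ∈ {lam : Fin N → YoungDiagram | totalCard N lam = k},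
          RatFunc.C (muHat N ε₁ ε₂ a m T lam) * Yobs N ε₁ ε₂ a (ε₁ + ε₂) lam) +
        (∑ᶠ lam ∈ {lam : Fin N → YoungDiagram | totalCard N lam = k - 1},
          RatFunc.C (muHat N ε₁ ε₂ a m T lam) * (Pmat N m 0 / Yobs N ε₁ ε₂ a 0 lam)) =
      algebraMap (Polynomial ℂ) (RatFunc ℂ) p := by
  have hcard {lam lam' : Fin N → YoungDiagram} {x} (h : AddsBox lam lam' x) :
      totalCard N lam' = k ↔ totalCard N lam = k - 1 := by
    have := h.totalCard_eq
    omega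
  suffices h : ∀ z, _ ∈ regularAt z from exists_algebraMap_eq_of_forall_mem_regularAt h
  intro z
  rw [finsum_mem_eq_finite_toFinset_sum _ (finite_setOf_totalCard_eq N k),
    finsum_mem_eq_finite_toFinset_sum _ (finite_setOf_totalCard_eq N (k - 1))]
  refine sum_add_sum_mem_of_biUnique (IsGeneric.biUnique_addsBox hgen z)
    (fun lam' hlam' hnone ↦ ?_) (fun lam hlam hnone ↦ ?_) ?_
  · refine mul_mem (HasValueAt.C z _).1 (Yobs_mem_regularAt hgen fun lam x hadd hx ↦ ?_)
    exact hnone lam (by simpa [← hcard hadd] using hlam') ⟨x, hadd, hx⟩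
  · refine mul_mem (HasValueAt.C z _).1 (Pmat_div_Yobs_mem_regularAt hgen m fun lam' x hadd hx ↦ ?_)
    exact hnone lam' (by simpa [hcard hadd] using hlam) ⟨x, hadd, hx⟩
  · rintro lam' - lam - ⟨x, hadd, rfl⟩
    exact hadd.add_mem_regularAt hgen m hT
end
end

section
/- Fix N ≥ 1, m ≥ 1, and complex numbers ε₁, ε₂, a₁,…,a_N, ν₁,…,ν_m satisfying: a_b − a_c + ν_r − ν_s + iε₁ + jε₂ ≠ 0 for all b,c ∈ {1,…,N}, r,s ∈ {1,…,m} and all integers i,j, unless b=c, r=s and i=j=0. Let m₁,…,m_{2N} ∈ ℂ, P(x)=∏_{f=1}^{2N}(x−m_f), let μ̂(λ̄), Y(x)|_{λ̄} be as in the instanton pseudo-measure setting, and set R(z) = (z−ε₁)(z−ε₂)/[z(z−ε₁−ε₂)]. Then for every integer k ≥ 0, the rational function Σ_{I⊔J={1,…,m}} Σ_{λ̄ : |λ̄| = k−|J|} μ̂(λ̄)·∏_{i∈I, j∈J} R(ν_i−ν_j)·∏_{i∈I} Y(x−ν_i+ε)|_{λ̄}·∏_{j∈J} P(x−ν_j)/Y(x−ν_j)|_{λ̄}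 is a polynomial in x; i.e., the average of the higher qq-character 𝒳(x;ν) = Σ_{I⊔J} 𝔮^{|J|} ∏_{i∈I,j∈J}R(ν_i−ν_j) ∏_{i∈I}Y(x−ν_i+ε) ∏_{j∈J}P(x−ν_j)/Y(x−ν_j) against the instanton pseudo-measure is, coefficientwise in 𝔮, a regular function of x. -/
open scoped BigOperators

noncomputable section

/-- The structure factor `R(z) = (z−ε₁)(z−ε₂)/[z(z−ε₁−ε₂)]`. -/
def Rfac (ε₁ ε₂ z : ℂ) : ℂ := (z - ε₁) * (z - ε₂) / (z * (z - ε₁ - ε₂))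

/-!
All poles in `x` of the summands are simple and located at `ν_r + a_b + c(□)`. Such a pole comes
either from `1/Y(x − ν_r)`, when `r ∈ J` and `□` can be added to `λ^{(b)}`, or from
`Y(x − ν_r + ε)`, when `r ∉ J` and `□` can be removed from `λ^{(b)}`. Trading the element `r` of `J`
for the box `□` of `λ^{(b)}` therefore pairs up the summands with a given pole and preserves
`|λ̄| + |J|`. The two residues in a pair are opposite: the factors `R(ν_i − ν_j)` account for the
change of the other `Y`-observables, and the ratio of the two tangent-weight products, read off the
character, accounts for the rest.
-/

namespace HigherQQ

section Regularity

variable {K : Type*} [Field K] {x v w : K} {f g : RatFunc K}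

/-- The local ring at `x`: the rational functions without a pole at `x`. -/
def regularAt (x : K) : Subring (RatFunc K) where
  carrier := {f | f.denom.eval x ≠ 0}
  mul_mem' {f g} hf hg h0 := by
    have := Polynomial.eval_eq_zero_of_dvd_of_eval_eq_zero (RatFunc.denom_mul_dvd f g) h0
    simp_all
  one_mem' := by simp
  add_mem' {f g} hf hg h0 := by
    have := Polynomial.eval_eq_zero_of_dvd_of_eval_eq_zero (RatFunc.denom_add_dvd f g) h0
    simp_all
  zero_mem' := by simp
  neg_mem' {f} hf h0 := by
    have hdvd : (-f).denom ∣ f.denom :=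
      (RatFunc.denom_dvd f.denom_ne_zero).2 ⟨-f.num, by rw [map_neg, neg_div, f.num_div_denom]⟩
    exact hf (Polynomial.eval_eq_zero_of_dvd_of_eval_eq_zero hdvd h0)

theorem mem_regularAt : f ∈ regularAt x ↔ f.denom.eval x ≠ 0 := Iff.rfl

theorem mem_regularAt_of_mul_eq {p q : Polynomial K} (hq : q.eval x ≠ 0)
    (h : f * algebraMap _ _ q = algebraMap _ _ p) : f ∈ regularAt x := by
  have hq0 : q ≠ 0 := by rintro rfl; simp at hq
  have hdvd : f.denom ∣ q :=
    (RatFunc.denom_dvd hq0).2 ⟨p, eq_div_of_mul_eq (RatFunc.algebraMap_ne_zero hq0) h⟩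
  exact fun h0 => hq (Polynomial.eval_eq_zero_of_dvd_of_eval_eq_zero hdvd h0)

theorem exists_polynomial_of_forall_mem_regularAt [IsAlgClosed K]
    (h : ∀ x, f ∈ regularAt x) : ∃ p, f = algebraMap (Polynomial K) (RatFunc K) p := by
  have hdeg : f.denom.degree = 0 := by
    by_contra hne
    obtain ⟨x, hx⟩ := IsAlgClosed.exists_root f.denom hne
    exact h x hx
  have hone : f.denom = 1 := f.monic_denom.degree_le_zero_iff_eq_one.1 hdeg.le
  exact ⟨f.num, by simpa [hone] using f.num_div_denom.symm⟩

/-- `f` has no pole at `x` and takes the value `v` there. The first condition is needed because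
`RatFunc.eval` is `0` at a pole. -/
def HasValueAt (f : RatFunc K) (x v : K) : Prop :=
  f ∈ regularAt x ∧ f.eval (RingHom.id K) x = v

theorem hasValueAt_eval (hf : f ∈ regularAt x) : HasValueAt f x (f.eval (RingHom.id K) x) :=
  ⟨hf, rfl⟩

theorem hasValueAt_algebraMap (p : Polynomial K) (x : K) :
    HasValueAt (algebraMap _ _ p) x (p.eval x) :=
  ⟨by simp [mem_regularAt], by simp [Polynomial.eval₂_id]⟩

theorem hasValueAt_C (c x : K) : HasValueAt (RatFunc.C c) x c :=
  ⟨by simp [mem_regularAt], by simp⟩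

theorem hasValueAt_X_sub_C (c x : K) : HasValueAt (RatFunc.X - RatFunc.C c) x (x - c) := by
  have h := hasValueAt_algebraMap (Polynomial.X - Polynomial.C c) x
  rwa [map_sub, RatFunc.algebraMap_X, RatFunc.algebraMap_C, Polynomial.eval_sub,
    Polynomial.eval_X, Polynomial.eval_C] at h

namespace HasValueAt

theorem add (hf : HasValueAt f x v) (hg : HasValueAt g x w) : HasValueAt (f + g) x (v + w) :=
  ⟨add_mem hf.1 hg.1, by rw [RatFunc.eval_add (RingHom.id K) x hf.1 hg.1, hf.2, hg.2]⟩

theorem mul (hf : HasValueAt f x v) (hg : HasValueAt g x w) : HasValueAt (f * g) x (v * w) :=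
  ⟨mul_mem hf.1 hg.1, by rw [RatFunc.eval_mul (RingHom.id K) x hf.1 hg.1, hf.2, hg.2]⟩

theorem inv (hf : HasValueAt f x v) (hv : v ≠ 0) : HasValueAt f⁻¹ x v⁻¹ := by
  have hf0 : f ≠ 0 := by rintro rfl; exact hv (by simpa using hf.2.symm)
  have hnum : f.num.eval x ≠ 0 := by
    intro h0
    exact hv (by rw [← hf.2, RatFunc.eval, Polynomial.eval₂_id, h0, zero_div])
  have hreg : f⁻¹ ∈ regularAt x := mem_regularAt_of_mul_eq (p := f.denom) hnum (by
    nth_rewrite 1 [← f.num_div_denom]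
    have := RatFunc.algebraMap_ne_zero (RatFunc.num_ne_zero hf0)
    field_simp)
  refine ⟨hreg, eq_inv_of_mul_eq_one_right ?_⟩
  rw [← hf.2, ← RatFunc.eval_mul (RingHom.id K) x hf.1 hreg, mul_inv_cancel₀ hf0, RatFunc.eval_one]

theorem div (hf : HasValueAt f x v) (hg : HasValueAt g x w) (hw : w ≠ 0) :
    HasValueAt (f / g) x (v / w) := by
  simpa only [div_eq_mul_inv] using hf.mul (hg.inv hw)

theorem prod {ι : Type*} {s : Finset ι} {f : ι → RatFunc K} {v : ι → K}
    (h : ∀ i ∈ s, HasValueAt (f i) x (v i)) : HasValueAt (∏ i ∈ s, f i) x (∏ i ∈ s, v i) := by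
  classical
  induction s using Finset.induction_on with
  | empty => simpa using hasValueAt_C 1 x
  | insert i s hi ih =>
    rw [Finset.prod_insert hi, Finset.prod_insert hi]
    exact (h i (by simp)).mul (ih fun j hj => h j (by simp [hj]))

end HasValueAt

theorem hasValueAt_prod_X_sub_C {ι : Type*} (s : Finset ι) (c : ι → K) (x : K) :
    HasValueAt (∏ i ∈ s, (RatFunc.X - RatFunc.C (c i))) x (∏ i ∈ s, (x - c i)) :=
  .prod fun i _ => hasValueAt_X_sub_C (c i) x

theorem X_sub_C_ne_zero (c : K) : (RatFunc.X - RatFunc.C c : RatFunc K) ≠ 0 := by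
  simpa using RatFunc.algebraMap_ne_zero (Polynomial.X_sub_C_ne_zero c)

/-- `f` has at most a simple pole at `x`, with residue `v`. -/
def HasResidueAt (f : RatFunc K) (x v : K) : Prop :=
  HasValueAt ((RatFunc.X - RatFunc.C x) * f) x v

namespace HasResidueAt

theorem add (hf : HasResidueAt f x v) (hg : HasResidueAt g x w) :
    HasResidueAt (f + g) x (v + w) := by
  simpa only [HasResidueAt, mul_add] using HasValueAt.add hf hg

theorem mul_hasValueAt (hf : HasResidueAt f x v) (hg : HasValueAt g x w) :
    HasResidueAt (f * g) x (v * w) := by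
  simpa only [HasResidueAt, mul_assoc] using HasValueAt.mul hf hg

theorem mem_regularAt (h : HasResidueAt f x 0) : f ∈ regularAt x := by
  obtain ⟨hreg, hval⟩ := h
  set g := (RatFunc.X - RatFunc.C x) * f with hg
  have hroot : g.num.IsRoot x := by
    simpa [RatFunc.eval, Polynomial.eval₂_id, HigherQQ.mem_regularAt.1 hreg] using hval
  obtain ⟨p, hp⟩ := Polynomial.dvd_iff_isRoot.2 hroot
  refine mem_regularAt_of_mul_eq (p := p) hreg (mul_left_cancel₀ (X_sub_C_ne_zero x) ?_)
  calc (RatFunc.X - RatFunc.C x) * (f * algebraMap _ _ g.denom)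
      = g * algebraMap _ _ g.denom := by rw [hg, mul_assoc]
    _ = algebraMap _ _ g.num := by
      rw [← eq_div_iff (RatFunc.algebraMap_ne_zero g.denom_ne_zero), g.num_div_denom]
    _ = (RatFunc.X - RatFunc.C x) * algebraMap _ _ p := by simp [hp]

end HasResidueAt

end Regularity

theorem sum_mem_of_involution {α A : Type*} [AddCommGroup A] (H : AddSubgroup A) {s : Finset α}
    {f : α → A} (τ : α → α) (hτ : Function.Involutive τ) (hs : ∀ a ∈ s, τ a ∈ s)
    (hfix : ∀ a ∈ s, τ a = a → f a ∈ H) (hpair : ∀ a ∈ s, τ a ≠ a → f a + f (τ a) ∈ H) :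
    ∑ a ∈ s, f a ∈ H := by
  have hmk (a : A) : QuotientAddGroup.mk' H a = 0 ↔ a ∈ H := QuotientAddGroup.eq_zero_iff a
  rw [← hmk, map_sum]
  refine Finset.sum_involution (fun a _ => τ a) (fun a ha => ?_) (fun a ha hne h => ?_) hs
    fun a _ => hτ a
  · rw [← map_add, hmk]
    by_cases h : τ a = a
    · rw [h]
      exact add_mem (hfix a ha h) (hfix a ha h)
    · exact hpair a ha h
  · exact hne ((hmk _).2 (hfix a ha h))

section YoungDiagrams

variable {μ : YoungDiagram} {c d : ℕ × ℕ}

theorem succ_mul_succ_le_card (h : c ∈ μ) : (c.1 + 1) * (c.2 + 1) ≤ μ.card := by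
  have hsub : Finset.range (c.1 + 1) ×ˢ Finset.range (c.2 + 1) ⊆ μ.cells := by
    intro d hd
    simp only [Finset.mem_product, Finset.mem_range, Nat.lt_succ_iff] at hd
    exact μ.up_left_mem hd.1 hd.2 h
  simpa using Finset.card_le_card hsub

theorem fst_lt_card (h : c ∈ μ) : c.1 < μ.card := by
  nlinarith [succ_mul_succ_le_card h]

theorem snd_lt_card (h : c ∈ μ) : c.2 < μ.card := by
  nlinarith [succ_mul_succ_le_card h]

theorem finite_setOf_card_le (k : ℕ) : {μ : YoungDiagram | μ.card ≤ k}.Finite := by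
  refine Set.Finite.of_finite_image (f := YoungDiagram.cells)
    ((Finset.range k ×ˢ Finset.range k).powerset.finite_toSet.subset ?_)
    fun μ _ ν _ h => YoungDiagram.ext h
  rintro _ ⟨μ, hμ, rfl⟩
  rw [Finset.mem_coe, Finset.mem_powerset]
  intro c hc
  have hc := (μ.mem_cells c).1 hc
  exact Finset.mem_product.2 ⟨Finset.mem_range.2 ((fst_lt_card hc).trans_le hμ),
    Finset.mem_range.2 ((snd_lt_card hc).trans_le hμ)⟩

open scoped Classical in
/-- The boxes that can be added to `μ`: the minimal elements of its complement. -/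
def addableBoxes (μ : YoungDiagram) : Finset (ℕ × ℕ) :=
  {c ∈ Finset.range (μ.card + 1) ×ˢ Finset.range (μ.card + 1) | Minimal (· ∉ μ) c}

open scoped Classical in
/-- The boxes that can be removed from `μ`: its maximal elements. -/
def removableBoxes (μ : YoungDiagram) : Finset (ℕ × ℕ) :=
  {c ∈ μ.cells | Maximal (· ∈ μ) c}

theorem mem_removableBoxes : c ∈ removableBoxes μ ↔ Maximal (· ∈ μ) c := by
  simpa [removableBoxes] using fun h : Maximal (· ∈ μ) c => h.prop

theorem minimal_notMem_iff : Minimal (· ∉ μ) c ↔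
    c ∉ μ ∧ (c.1 = 0 ∨ (c.1 - 1, c.2) ∈ μ) ∧ (c.2 = 0 ∨ (c.1, c.2 - 1) ∈ μ) := by
  obtain ⟨i, j⟩ := c
  simp only [minimal_iff_forall_lt, not_not]
  refine and_congr_right fun _ => ⟨fun h => ⟨?_, ?_⟩, ?_⟩
  · exact or_iff_not_imp_left.2 fun hi => h (Prod.mk_lt_mk.2 (by omega))
  · exact or_iff_not_imp_left.2 fun hj => h (Prod.mk_lt_mk.2 (by omega))
  · rintro ⟨hi, hj⟩ ⟨i', j'⟩ hlt
    rcases Prod.mk_lt_mk.1 hlt with ⟨h₁, h₂⟩ | ⟨h₁, h₂⟩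
    · exact μ.up_left_mem (by omega) h₂ (hi.resolve_left (by omega))
    · exact μ.up_left_mem h₁ (by omega) (hj.resolve_left (by omega))

theorem maximal_mem_iff : Maximal (· ∈ μ) c ↔
    c ∈ μ ∧ (c.1 + 1, c.2) ∉ μ ∧ (c.1, c.2 + 1) ∉ μ := by
  obtain ⟨i, j⟩ := c
  simp only [maximal_iff_forall_gt]
  refine and_congr_right fun _ => ⟨fun h => ⟨h ?_, h ?_⟩, ?_⟩
  · exact Prod.mk_lt_mk.2 (by omega)
  · exact Prod.mk_lt_mk.2 (by omega)
  · rintro ⟨hi, hj⟩ ⟨i', j'⟩ hlt hmem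
    rcases Prod.mk_lt_mk.1 hlt with ⟨h₁, h₂⟩ | ⟨h₁, h₂⟩
    · exact hi (μ.up_left_mem h₁ h₂ hmem)
    · exact hj (μ.up_left_mem h₁ h₂ hmem)

theorem mem_addableBoxes : c ∈ addableBoxes μ ↔ Minimal (· ∉ μ) c := by
  simp only [addableBoxes, Finset.mem_filter, Finset.mem_product, Finset.mem_range,
    and_iff_right_iff_imp, Nat.lt_succ_iff]
  intro h
  obtain ⟨-, hi, hj⟩ := minimal_notMem_iff.1 h
  constructor
  · rcases hi with hi | hi
    · omega
    · have := fst_lt_card hi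
      omega
  · rcases hj with hj | hj
    · omega
    · have := snd_lt_card hj
      omega

/-- The diagram generated by `μ` and the box `c`. -/
def addBox (μ : YoungDiagram) (c : ℕ × ℕ) : YoungDiagram where
  cells := μ.cells ∪ Finset.Iic c
  isLowerSet := by
    rw [Finset.coe_union, Finset.coe_Iic]
    exact μ.isLowerSet.union (isLowerSet_Iic c)

/-- The largest subdiagram of `μ` that does not contain the box `c`. -/
def removeBox (μ : YoungDiagram) (c : ℕ × ℕ) : YoungDiagram where
  cells := {d ∈ μ.cells | ¬c ≤ d}
  isLowerSet d e hed hd := by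
    simp only [Finset.coe_filter, YoungDiagram.mem_cells, Set.mem_ofPred_eq] at hd ⊢
    exact ⟨μ.isLowerSet hed hd.1, fun hce => hd.2 (hce.trans hed)⟩

theorem cells_addBox (h : c ∈ addableBoxes μ) : (addBox μ c).cells = insert c μ.cells := by
  rw [mem_addableBoxes, minimal_iff_forall_lt] at h
  ext d
  simp only [addBox, Finset.mem_union, YoungDiagram.mem_cells, Finset.mem_Iic, Finset.mem_insert,
    le_iff_eq_or_lt]
  have := @h.2 d
  tauto

theorem cells_removeBox (h : c ∈ removableBoxes μ) :
    (removeBox μ c).cells = μ.cells.erase c := by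
  rw [mem_removableBoxes, maximal_iff_forall_gt] at h
  ext d
  simp only [removeBox, Finset.mem_filter, YoungDiagram.mem_cells, Finset.mem_erase,
    le_iff_eq_or_lt, eq_comm (a := c)]
  have := @h.2 d
  tauto

theorem notMem_of_mem_addableBoxes (h : c ∈ addableBoxes μ) : c ∉ μ.cells :=
  (mem_addableBoxes.1 h).prop

theorem mem_of_mem_removableBoxes (h : c ∈ removableBoxes μ) : c ∈ μ.cells :=
  (mem_removableBoxes.1 h).prop

theorem mem_removableBoxes_addBox (h : c ∈ addableBoxes μ) :
    c ∈ removableBoxes (addBox μ c) := by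
  rw [mem_removableBoxes, maximal_iff_forall_gt]
  simp only [← YoungDiagram.mem_cells, cells_addBox h, Finset.mem_insert, true_or, true_and]
  rintro d hcd (rfl | hd)
  · exact hcd.false
  · exact notMem_of_mem_addableBoxes h (μ.isLowerSet hcd.le hd)

theorem mem_addableBoxes_removeBox (h : c ∈ removableBoxes μ) :
    c ∈ addableBoxes (removeBox μ c) := by
  rw [mem_addableBoxes, minimal_iff_forall_lt]
  simp only [← YoungDiagram.mem_cells, cells_removeBox h, Finset.mem_erase, ne_eq,
    not_true_eq_false, false_and, not_false_eq_true, not_not, true_and]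
  exact fun d hdc => ⟨hdc.ne, μ.isLowerSet hdc.le (mem_of_mem_removableBoxes h)⟩

theorem addBox_removeBox (h : c ∈ removableBoxes μ) : addBox (removeBox μ c) c = μ :=
  YoungDiagram.ext <| by
    rw [cells_addBox (mem_addableBoxes_removeBox h), cells_removeBox h,
      Finset.insert_erase (mem_of_mem_removableBoxes h)]

theorem removeBox_addBox (h : c ∈ addableBoxes μ) : removeBox (addBox μ c) c = μ :=
  YoungDiagram.ext <| by
    rw [cells_removeBox (mem_removableBoxes_addBox h), cells_addBox h,
      Finset.erase_insert (notMem_of_mem_addableBoxes h)]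

theorem count_map_add_right (s : Finset (ℕ × ℕ)) (c e : ℕ × ℕ) :
    (s.val.map (· + e)).count c = if e ≤ c ∧ c - e ∈ s then 1 else 0 := by
  have hmap : s.val.map (· + e) = (s.map (addRightEmbedding e)).val := rfl
  rw [hmap, Multiset.count_eq_of_nodup (Finset.nodup _)]
  refine if_congr ?_ rfl rfl
  simp only [Finset.mem_val, Finset.mem_map, addRightEmbedding_apply]
  refine ⟨?_, fun ⟨hec, hc⟩ => ⟨_, hc, tsub_add_cancel_of_le hec⟩⟩
  rintro ⟨d, hd, rfl⟩
  exact ⟨le_add_self, by rwa [add_tsub_cancel_right]⟩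

theorem corner_multiset_identity (μ : YoungDiagram) :
    (0 : ℕ × ℕ) ::ₘ μ.cells.val.map (· + (1, 0)) + μ.cells.val.map (· + (0, 1)) +
        (removableBoxes μ).val.map (· + (1, 1)) =
      (addableBoxes μ).val + μ.cells.val + μ.cells.val.map (· + (1, 1)) := by
  have count_val (s : Finset (ℕ × ℕ)) (c : ℕ × ℕ) : s.val.count c = if c ∈ s then 1 else 0 :=
    Multiset.count_eq_of_nodup s.nodup
  have hup (i j : ℕ) : ((i + 1, j) ∈ μ → (i, j) ∈ μ) ∧ ((i, j + 1) ∈ μ → (i, j) ∈ μ) :=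
    ⟨μ.up_left_mem i.le_succ le_rfl, μ.up_left_mem le_rfl j.le_succ⟩
  ext ⟨i, j⟩
  simp only [Multiset.count_add, Multiset.count_cons, count_val, count_map_add_right,
    mem_addableBoxes, mem_removableBoxes, minimal_notMem_iff, maximal_mem_iff,
    YoungDiagram.mem_cells, Prod.le_def]
  rcases i with _ | i <;> rcases j with _ | j
  · by_cases h : (0, 0) ∈ μ <;> simp [h]
  · have := hup 0 j
    by_cases h : (0, j) ∈ μ <;> by_cases h' : (0, j + 1) ∈ μ <;> simp_all
  · have := hup i 0
    by_cases h : (i, 0) ∈ μ <;> by_cases h' : (i + 1, 0) ∈ μ <;> simp_all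
  · have := hup i j
    have := hup i (j + 1)
    have := hup (i + 1) j
    by_cases (i, j) ∈ μ <;> by_cases (i + 1, j) ∈ μ <;> by_cases (i, j + 1) ∈ μ <;>
      by_cases (i + 1, j + 1) ∈ μ <;> simp_all

@[to_additive]
theorem corner_prod_identity {M : Type*} [CommMonoid M] (μ : YoungDiagram) (f : ℕ × ℕ → M) :
    f 0 * (∏ c ∈ μ.cells, f (c + (1, 0))) * (∏ c ∈ μ.cells, f (c + (0, 1))) *
        ∏ c ∈ removableBoxes μ, f (c + (1, 1)) =
      (∏ c ∈ addableBoxes μ, f c) * (∏ c ∈ μ.cells, f c) * ∏ c ∈ μ.cells, f (c + (1, 1)) := by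
  have h := congrArg (fun s => (s.map f).prod) (corner_multiset_identity μ)
  simp only [Multiset.map_add, Multiset.map_cons, Multiset.map_map, Function.comp_def,
    Multiset.prod_add, Multiset.prod_cons] at h
  exact h

theorem card_addableBoxes (μ : YoungDiagram) :
    (addableBoxes μ).card = (removableBoxes μ).card + 1 := by
  have h := corner_sum_identity μ fun _ => (1 : ℕ)
  simp only [← Finset.card_eq_sum_ones] at h
  omega

end YoungDiagrams

section Tuples

/-- A box of an `N`-tuple of Young diagrams, tagged with the index of its diagram. -/
abbrev Box (N : ℕ) := (_ : Fin N) × (ℕ × ℕ)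

variable {N : ℕ} {lam : Fin N → YoungDiagram} {p : Box N}

/-- The boxes of a tuple of Young diagrams. -/
def boxes (lam : Fin N → YoungDiagram) : Finset (Box N) :=
  Finset.univ.sigma fun b => (lam b).cells

/-- The boxes that can be added to a tuple of Young diagrams. -/
def addable (lam : Fin N → YoungDiagram) : Finset (Box N) :=
  Finset.univ.sigma fun b => addableBoxes (lam b)

/-- The boxes that can be removed from a tuple of Young diagrams. -/
def removable (lam : Fin N → YoungDiagram) : Finset (Box N) :=
  Finset.univ.sigma fun b => removableBoxes (lam b)

/-- The tuple `lam` with the box `p` added to its `p.1`-th diagram. -/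
def addAt (lam : Fin N → YoungDiagram) (p : Box N) : Fin N → YoungDiagram :=
  Function.update lam p.1 (addBox (lam p.1) p.2)

/-- The tuple `lam` with the box `p` removed from its `p.1`-th diagram. -/
def removeAt (lam : Fin N → YoungDiagram) (p : Box N) : Fin N → YoungDiagram :=
  Function.update lam p.1 (removeBox (lam p.1) p.2)

theorem mem_boxes : p ∈ boxes lam ↔ p.2 ∈ (lam p.1).cells := by simp [boxes]

theorem mem_addable : p ∈ addable lam ↔ p.2 ∈ addableBoxes (lam p.1) := by simp [addable]

theorem mem_removable : p ∈ removable lam ↔ p.2 ∈ removableBoxes (lam p.1) := by simp [removable]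

theorem mem_addable_removeAt (h : p ∈ removable lam) : p ∈ addable (removeAt lam p) := by
  rw [mem_addable, removeAt, Function.update_self]
  exact mem_addableBoxes_removeBox (mem_removable.1 h)

theorem mem_removable_addAt (h : p ∈ addable lam) : p ∈ removable (addAt lam p) := by
  rw [mem_removable, addAt, Function.update_self]
  exact mem_removableBoxes_addBox (mem_addable.1 h)

theorem addAt_removeAt (h : p ∈ removable lam) : addAt (removeAt lam p) p = lam := by
  simp [addAt, removeAt, addBox_removeBox (mem_removable.1 h)]

theorem removeAt_addAt (h : p ∈ addable lam) : removeAt (addAt lam p) p = lam := by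
  simp [addAt, removeAt, removeBox_addBox (mem_addable.1 h)]

theorem notMem_boxes_of_mem_addable (h : p ∈ addable lam) : p ∉ boxes lam :=
  mem_boxes.not.2 (notMem_of_mem_addableBoxes (mem_addable.1 h))

theorem boxes_addAt (h : p ∈ addable lam) : boxes (addAt lam p) = insert p (boxes lam) := by
  ext ⟨b, c⟩
  obtain ⟨b₀, c₀⟩ := p
  rw [mem_boxes, Finset.mem_insert, mem_boxes, addAt]
  by_cases hb : b = b₀
  · subst hb
    rw [Function.update_self, cells_addBox (mem_addable.1 h), Finset.mem_insert]
    simp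
  · simp [hb]

@[to_additive]
theorem prod_boxes_addAt {M : Type*} [CommMonoid M] (h : p ∈ addable lam)
    (f : Box N → M) :
    ∏ q ∈ boxes (addAt lam p), f q = f p * ∏ q ∈ boxes lam, f q := by
  rw [boxes_addAt h, Finset.prod_insert (notMem_boxes_of_mem_addable h)]

theorem card_boxes (lam : Fin N → YoungDiagram) : (boxes lam).card = totalCard N lam :=
  Finset.card_sigma _ _

theorem totalCard_addAt (h : p ∈ addable lam) :
    totalCard N (addAt lam p) = totalCard N lam + 1 := by
  rw [← card_boxes, ← card_boxes, boxes_addAt h,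
    Finset.card_insert_of_notMem (notMem_boxes_of_mem_addable h)]

theorem card_addable (lam : Fin N → YoungDiagram) :
    (addable lam).card = (removable lam).card + N := by
  simp [addable, removable, card_addableBoxes, Finset.sum_add_distrib]

theorem finite_setOf_totalCard_le (N k : ℕ) :
    {lam : Fin N → YoungDiagram | totalCard N lam ≤ k}.Finite :=
  (Set.Finite.pi' fun _ => finite_setOf_card_le k).subset fun lam hlam b =>
    (Finset.single_le_sum (f := fun b => (lam b).card) (fun _ _ => Nat.zero_le _)
      (Finset.mem_univ b)).trans hlam

theorem finite_setOf_totalCard_add_eq (N k n : ℕ) :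
    {lam : Fin N → YoungDiagram | totalCard N lam + n = k}.Finite :=
  (finite_setOf_totalCard_le N k).subset fun _ h => (Nat.le_add_right _ n).trans (le_of_eq h)

theorem sum_finsum_mem_totalCard_eq_sum {ι M : Type*} [Fintype ι] [AddCommMonoid M] (k : ℕ)
    (f : Finset ι → (Fin N → YoungDiagram) → M) :
    ∃ s : Finset (Finset ι × (Fin N → YoungDiagram)),
      (∀ x, x ∈ s ↔ totalCard N x.2 + x.1.card = k) ∧
      ∑ J, ∑ᶠ lam ∈ {lam | totalCard N lam + J.card = k}, f J lam = ∑ x ∈ s, f x.1 x.2 := by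
  have hfin (J : Finset ι) := finite_setOf_totalCard_add_eq N k J.card
  have hset : {x : Finset ι × (Fin N → YoungDiagram) | totalCard N x.2 + x.1.card = k}.Finite :=
    (Set.finite_univ.prod (finite_setOf_totalCard_le N k)).subset fun x h =>
      ⟨Set.mem_univ _, (Nat.le_add_right _ _).trans (le_of_eq h)⟩
  refine ⟨hset.toFinset, fun x => hset.mem_toFinset, ?_⟩
  rw [Finset.sum_finset_product' _ Finset.univ (fun J => (hfin J).toFinset) (by simp)]
  exact Finset.sum_congr rfl fun J _ => finsum_mem_eq_finite_toFinset_sum _ (hfin J)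

end Tuples

section TangentCharacter

variable {N : ℕ} (ε₁ ε₂ : ℂ) (a : Fin N → ℂ) {lam : Fin N → YoungDiagram}
  {p : Box N}

/-- The weight `a_b + c(□)` of a box `□` in the `b`-th diagram. -/
def boxWeight (p : Box N) : ℂ := a p.1 + content ε₁ ε₂ p.2

theorem content_zero : content ε₁ ε₂ 0 = 0 := by simp [content]

theorem content_add (c d : ℕ × ℕ) :
    content ε₁ ε₂ (c + d) = content ε₁ ε₂ c + content ε₁ ε₂ d := by
  simp only [content, Prod.fst_add, Prod.snd_add, Nat.cast_add]
  ring

theorem framing_sub_boxes_eq_addable_sub_removable {R : Type*} [CommRing R] (E : ℂ → R)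
    (hE : ∀ x y, E (x + y) = E x * E y) (lam : Fin N → YoungDiagram) :
    ∑ b, E (a b) - (1 - E ε₁) * (1 - E ε₂) * ∑ p ∈ boxes lam, E (boxWeight ε₁ ε₂ a p) =
      ∑ p ∈ addable lam, E (boxWeight ε₁ ε₂ a p) -
        E ε₁ * E ε₂ * ∑ p ∈ removable lam, E (boxWeight ε₁ ε₂ a p) := by
  rw [boxes, addable, removable, Finset.sum_sigma, Finset.sum_sigma, Finset.sum_sigma,
    Finset.mul_sum, Finset.mul_sum, ← Finset.sum_sub_distrib, ← Finset.sum_sub_distrib]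
  refine Finset.sum_congr rfl fun b _ => ?_
  have h := corner_sum_identity (lam b) fun c => E (a b + content ε₁ ε₂ c)
  have h₁ : content ε₁ ε₂ (1, 0) = ε₁ := by simp [content]
  have h₂ : content ε₁ ε₂ (0, 1) = ε₂ := by simp [content]
  have h₁₂ : content ε₁ ε₂ (1, 1) = ε₁ + ε₂ := by simp [content]
  simp only [content_zero, content_add, h₁, h₂, h₁₂, add_zero, ← add_assoc, hE _ ε₁, hE _ ε₂,
    ← Finset.sum_mul] at h
  simp only [boxWeight]
  linear_combination h

theorem eExp_zero : eExp 0 = 1 := rfl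

theorem eExp_add (x y : ℂ) : eExp (x + y) = eExp x * eExp y := by
  simp [eExp, AddMonoidAlgebra.single_mul_single]

theorem eExp_mul_eExp_neg (x : ℂ) : eExp x * eExp (-x) = 1 := by
  rw [← eExp_add, add_neg_cancel, eExp_zero]

theorem tangentChar_eq (lam : Fin N → YoungDiagram) :
    tangentChar N ε₁ ε₂ a lam =
      (∑ b, eExp (a b)) * (∑ p ∈ boxes lam, eExp (-boxWeight ε₁ ε₂ a p)) +
        eExp (ε₁ + ε₂) * ((∑ p ∈ boxes lam, eExp (boxWeight ε₁ ε₂ a p)) * ∑ b, eExp (-a b)) -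
        (1 - eExp ε₁) * (1 - eExp ε₂) * ((∑ p ∈ boxes lam, eExp (boxWeight ε₁ ε₂ a p)) *
          ∑ p ∈ boxes lam, eExp (-boxWeight ε₁ ε₂ a p)) := by
  have hchi (b : Fin N) : ∑ c ∈ (lam b).cells, eExp (a b + content ε₁ ε₂ c) =
      eExp (a b) * chi ε₁ ε₂ (lam b) := by
    simp only [chi, Finset.mul_sum, ← eExp_add]
  have hchiStar (b : Fin N) : ∑ c ∈ (lam b).cells, eExp (-(a b + content ε₁ ε₂ c)) =
      eExp (-a b) * chiStar ε₁ ε₂ (lam b) := by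
    simp only [chiStar, Finset.mul_sum, ← eExp_add, neg_add]
  simp only [boxes, boxWeight, Finset.sum_sigma, hchi, hchiStar, Finset.sum_mul_sum]
  simp only [Finset.mul_sum, ← Finset.sum_add_distrib, ← Finset.sum_sub_distrib, tangentChar]
  refine Finset.sum_congr rfl fun b _ => Finset.sum_congr rfl fun c _ => ?_
  rw [sub_eq_add_neg (a b), eExp_add (a b)]
  ring

theorem tangentChar_addAt_eq (h : p ∈ addable lam) :
    tangentChar N ε₁ ε₂ a (addAt lam p) = tangentChar N ε₁ ε₂ a lam +
      eExp (-boxWeight ε₁ ε₂ a p) * (∑ q ∈ addable lam, eExp (boxWeight ε₁ ε₂ a q) -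
        eExp ε₁ * eExp ε₂ * ∑ q ∈ removable lam, eExp (boxWeight ε₁ ε₂ a q)) +
      eExp (ε₁ + ε₂) * eExp (boxWeight ε₁ ε₂ a p) *
        (∑ q ∈ addable lam, eExp (-boxWeight ε₁ ε₂ a q) -
          eExp (-ε₁) * eExp (-ε₂) * ∑ q ∈ removable lam, eExp (-boxWeight ε₁ ε₂ a q)) -
      (1 - eExp ε₁) * (1 - eExp ε₂) := by
  rw [← framing_sub_boxes_eq_addable_sub_removable ε₁ ε₂ a eExp eExp_add,
    ← framing_sub_boxes_eq_addable_sub_removable ε₁ ε₂ a (fun x => eExp (-x))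
      (fun x y => by rw [neg_add, eExp_add]), tangentChar_eq, tangentChar_eq,
    sum_boxes_addAt h, sum_boxes_addAt h, eExp_add]
  have hdual : (1 - eExp ε₁) * (1 - eExp ε₂) =
      eExp ε₁ * eExp ε₂ * ((1 - eExp (-ε₁)) * (1 - eExp (-ε₂))) := by
    linear_combination (eExp ε₂ - eExp ε₂ * eExp (-ε₂)) * eExp_mul_eExp_neg ε₁ +
      (eExp ε₁ - 1) * eExp_mul_eExp_neg ε₂
  linear_combination (-(1 - eExp ε₁) * (1 - eExp ε₂)) * eExp_mul_eExp_neg (boxWeight ε₁ ε₂ a p) -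
    eExp (boxWeight ε₁ ε₂ a p) * (∑ q ∈ boxes lam, eExp (-boxWeight ε₁ ε₂ a q)) * hdual

theorem tangentChar_addAt_add (h : p ∈ addable lam) :
    tangentChar N ε₁ ε₂ a (addAt lam p) +
        (∑ q ∈ removable lam, eExp (boxWeight ε₁ ε₂ a q + (ε₁ + ε₂) - boxWeight ε₁ ε₂ a p) +
          ∑ q ∈ removable lam, eExp (boxWeight ε₁ ε₂ a p - boxWeight ε₁ ε₂ a q)) =
      tangentChar N ε₁ ε₂ a lam + (eExp ε₁ + eExp ε₂ +
        (∑ q ∈ (addable lam).erase p, eExp (boxWeight ε₁ ε₂ a q - boxWeight ε₁ ε₂ a p) +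
          ∑ q ∈ (addable lam).erase p,
            eExp (boxWeight ε₁ ε₂ a p + (ε₁ + ε₂) - boxWeight ε₁ ε₂ a q))) := by
  rw [tangentChar_addAt_eq ε₁ ε₂ a h, ← Finset.add_sum_erase _ _ h, ← Finset.add_sum_erase _ _ h]
  simp only [sub_eq_add_neg, eExp_add, ← Finset.sum_mul, ← Finset.mul_sum]
  have h₁ := eExp_mul_eExp_neg ε₁
  have h₂ := eExp_mul_eExp_neg ε₂
  have h₁₂ : eExp ε₁ * eExp ε₂ * (eExp (-ε₁) * eExp (-ε₂)) = 1 := by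
    linear_combination eExp ε₂ * eExp (-ε₂) * h₁ + h₂
  linear_combination (1 + eExp ε₁ * eExp ε₂) * eExp_mul_eExp_neg (boxWeight ε₁ ε₂ a p) -
    eExp (boxWeight ε₁ ε₂ a p) * (∑ q ∈ removable lam, eExp (-boxWeight ε₁ ε₂ a q)) * h₁₂

/-- The character `Σ_{w ∈ S} e^w` of a multiset of weights. -/
def formalChar (S : Multiset ℂ) : AddMonoidAlgebra ℤ ℂ := (S.map eExp).sum

theorem coeff_formalChar (S : Multiset ℂ) (w : ℂ) : (formalChar S).coeff w = S.count w := by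
  induction S using Multiset.induction_on with
  | empty => simp [formalChar]
  | cons x S ih =>
    rw [formalChar, Multiset.map_cons, Multiset.sum_cons, ← formalChar, AddMonoidAlgebra.coeff_add,
      Finsupp.add_apply, ih, eExp, AddMonoidAlgebra.coeff_single, Finsupp.single_apply,
      Multiset.count_cons, Nat.cast_add, add_comm]
    simp only [eq_comm, Nat.cast_ite, Nat.cast_one, Nat.cast_zero]

theorem formalChar_injective : Function.Injective formalChar := by
  intro S S' h
  ext w
  exact_mod_cast (coeff_formalChar S w).symm.trans (h ▸ coeff_formalChar S' w)

/-- `T lam` is the multiset of tangent weights at the fixed point labelled by `lam`. -/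
def IsTangentWeights (T : (Fin N → YoungDiagram) → Multiset ℂ) : Prop :=
  ∀ lam, formalChar (T lam) = tangentChar N ε₁ ε₂ a lam

variable {ε₁ ε₂ a} in
theorem IsTangentWeights.prod_addAt {T : (Fin N → YoungDiagram) → Multiset ℂ}
    (hT : IsTangentWeights ε₁ ε₂ a T) (h : p ∈ addable lam) :
    (T (addAt lam p)).prod *
        ((∏ q ∈ removable lam, (boxWeight ε₁ ε₂ a q + (ε₁ + ε₂) - boxWeight ε₁ ε₂ a p)) *
          ∏ q ∈ removable lam, (boxWeight ε₁ ε₂ a p - boxWeight ε₁ ε₂ a q)) =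
      (T lam).prod * (ε₁ * ε₂ *
        ((∏ q ∈ (addable lam).erase p, (boxWeight ε₁ ε₂ a q - boxWeight ε₁ ε₂ a p)) *
          ∏ q ∈ (addable lam).erase p,
            (boxWeight ε₁ ε₂ a p + (ε₁ + ε₂) - boxWeight ε₁ ε₂ a q))) := by
  have hmul : T (addAt lam p) +
      ((removable lam).val.map (fun q => boxWeight ε₁ ε₂ a q + (ε₁ + ε₂) - boxWeight ε₁ ε₂ a p) +
        (removable lam).val.map fun q => boxWeight ε₁ ε₂ a p - boxWeight ε₁ ε₂ a q) =
      T lam + ({ε₁} + {ε₂} +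
        (((addable lam).erase p).val.map (fun q => boxWeight ε₁ ε₂ a q - boxWeight ε₁ ε₂ a p) +
          ((addable lam).erase p).val.map fun q =>
            boxWeight ε₁ ε₂ a p + (ε₁ + ε₂) - boxWeight ε₁ ε₂ a q)) := by
    apply formalChar_injective
    have hchar := tangentChar_addAt_add ε₁ ε₂ a h
    rw [← hT, ← hT] at hchar
    simp only [formalChar, Multiset.map_add, Multiset.map_map, Function.comp_def,
      Multiset.sum_add, Multiset.map_singleton, Multiset.sum_singleton] at hchar ⊢
    exact hchar
  have hprod := congrArg Multiset.prod hmul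
  simp only [Multiset.prod_add, Multiset.prod_singleton] at hprod
  exact hprod

end TangentCharacter

section Residues

variable {N : ℕ} {ε₁ ε₂ : ℂ} {a : Fin N → ℂ} {lam : Fin N → YoungDiagram} {p q : Box N}

theorem ne_of_mem_addable_of_mem_removable (hp : p ∈ addable lam) (hq : q ∈ removable lam) :
    p ≠ q := by
  rintro rfl
  exact notMem_of_mem_addableBoxes (mem_addable.1 hp)
    (mem_of_mem_removableBoxes (mem_removable.1 hq))

theorem boxWeight_mk_add (b : Fin N) (c d : ℕ × ℕ) :
    boxWeight ε₁ ε₂ a ⟨b, c + d⟩ = boxWeight ε₁ ε₂ a ⟨b, c⟩ + content ε₁ ε₂ d := by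
  simp only [boxWeight, content_add, add_assoc]

theorem eq_mk_add_of_boxWeight_add_eq (hw : Function.Injective (boxWeight ε₁ ε₂ a))
    (h : boxWeight ε₁ ε₂ a p + (ε₁ + ε₂) = boxWeight ε₁ ε₂ a q) :
    q = ⟨p.1, p.2 + (1, 1)⟩ := by
  refine hw (h.symm.trans ?_)
  rw [boxWeight_mk_add]
  simp [content]

theorem ε₁_ne_zero (hw : Function.Injective (boxWeight ε₁ ε₂ a)) (b : Fin N) : ε₁ ≠ 0 := by
  rintro rfl
  simpa using @hw ⟨b, (1, 0)⟩ ⟨b, 0⟩ (by simp [boxWeight, content])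

theorem ε₂_ne_zero (hw : Function.Injective (boxWeight ε₁ ε₂ a)) (b : Fin N) : ε₂ ≠ 0 := by
  rintro rfl
  simpa using @hw ⟨b, (0, 1)⟩ ⟨b, 0⟩ (by simp [boxWeight, content])

theorem boxWeight_sub_ne_zero (hw : Function.Injective (boxWeight ε₁ ε₂ a)) (h : p ≠ q) :
    boxWeight ε₁ ε₂ a p - boxWeight ε₁ ε₂ a q ≠ 0 :=
  sub_ne_zero.2 (hw.ne h)

theorem removable_add_sub_addable_ne_zero (hw : Function.Injective (boxWeight ε₁ ε₂ a))
    (hq : q ∈ removable lam) (hp : p ∈ addable lam) :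
    boxWeight ε₁ ε₂ a q + (ε₁ + ε₂) - boxWeight ε₁ ε₂ a p ≠ 0 := by
  intro h
  obtain rfl := eq_mk_add_of_boxWeight_add_eq hw (sub_eq_zero.1 h)
  have hp' := (minimal_notMem_iff.1 (mem_addableBoxes.1 (mem_addable.1 hp))).2.2
  have hq' := (maximal_mem_iff.1 (mem_removableBoxes.1 (mem_removable.1 hq))).2.1
  exact hq' (by simpa using hp')

theorem addable_add_sub_addable_ne_zero (hw : Function.Injective (boxWeight ε₁ ε₂ a))
    (hp : p ∈ addable lam) (hq : q ∈ addable lam) :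
    boxWeight ε₁ ε₂ a p + (ε₁ + ε₂) - boxWeight ε₁ ε₂ a q ≠ 0 := by
  intro h
  obtain rfl := eq_mk_add_of_boxWeight_add_eq hw (sub_eq_zero.1 h)
  have hlt : p.2 < p.2 + (1, 1) := lt_add_of_pos_right _ (by simp [Prod.lt_iff])
  exact (mem_addableBoxes.1 (mem_addable.1 hp)).prop
    (not_not.1 ((mem_addableBoxes.1 (mem_addable.1 hq)).not_prop_of_lt hlt))

theorem Yobs_eq_div (s : ℂ) (lam : Fin N → YoungDiagram) :
    Yobs N ε₁ ε₂ a s lam =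
      (∏ q ∈ addable lam, (RatFunc.X - RatFunc.C (boxWeight ε₁ ε₂ a q - s))) /
        ∏ q ∈ removable lam,
          (RatFunc.X - RatFunc.C (boxWeight ε₁ ε₂ a q + (ε₁ + ε₂) - s)) := by
  have hlin (w : ℂ) : RatFunc.X + RatFunc.C s - RatFunc.C w = RatFunc.X - RatFunc.C (w - s) := by
    rw [map_sub]
    ring
  have hprod (S : Finset (ℕ × ℕ)) (g : ℕ × ℕ → ℂ) :
      ∏ c ∈ S, (RatFunc.X - RatFunc.C (g c) : RatFunc ℂ) ≠ 0 :=
    Finset.prod_ne_zero_iff.2 fun c _ => X_sub_C_ne_zero (g c)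
  rw [addable, removable, Yobs, Finset.prod_sigma, Finset.prod_sigma, ← Finset.prod_div_distrib]
  refine Finset.prod_congr rfl fun b _ => ?_
  have h := corner_prod_identity (lam b) fun c =>
    (RatFunc.X - RatFunc.C (a b + content ε₁ ε₂ c - s) : RatFunc ℂ)
  have h₁ : content ε₁ ε₂ (1, 0) = ε₁ := by simp [content]
  have h₂ : content ε₁ ε₂ (0, 1) = ε₂ := by simp [content]
  have h₁₂ : content ε₁ ε₂ (1, 1) = ε₁ + ε₂ := by simp [content]
  simp only [content_zero, content_add, h₁, h₂, h₁₂, add_zero, ← add_assoc] at h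
  simp only [hlin, boxWeight, ← add_assoc]
  rw [Finset.prod_div_distrib, Finset.prod_mul_distrib, Finset.prod_mul_distrib,
    ← mul_div_assoc, div_eq_div_iff (mul_ne_zero (hprod _ _) (hprod _ _)) (hprod _ _)]
  linear_combination h

/-- The structure factor `R(x + s - w)` as a rational function of `x`. -/
def boxFactor (ε₁ ε₂ s w : ℂ) : RatFunc ℂ :=
  (RatFunc.X - RatFunc.C (w + ε₁ - s)) * (RatFunc.X - RatFunc.C (w + ε₂ - s)) /
    ((RatFunc.X - RatFunc.C (w - s)) * (RatFunc.X - RatFunc.C (w + (ε₁ + ε₂) - s)))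

theorem Yobs_addAt (h : p ∈ addable lam) (s : ℂ) :
    Yobs N ε₁ ε₂ a s (addAt lam p) =
      boxFactor ε₁ ε₂ s (boxWeight ε₁ ε₂ a p) * Yobs N ε₁ ε₂ a s lam := by
  have hlin (w : ℂ) : RatFunc.X - RatFunc.C (w - s) = RatFunc.X + RatFunc.C s - RatFunc.C w := by
    rw [map_sub]
    ring
  have hsplit := prod_boxes_addAt h fun q => boxFactor ε₁ ε₂ s (boxWeight ε₁ ε₂ a q)
  simp only [boxes, Finset.prod_sigma, boxFactor, hlin, boxWeight] at hsplit ⊢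
  rw [Yobs, Yobs, Finset.prod_mul_distrib, Finset.prod_mul_distrib, hsplit]
  ring

theorem hasValueAt_boxFactor {x s w : ℂ} (h : Rfac ε₁ ε₂ (x + s - w) ≠ 0) :
    HasValueAt (boxFactor ε₁ ε₂ s w) x (Rfac ε₁ ε₂ (x + s - w)) := by
  have heq : Rfac ε₁ ε₂ (x + s - w) = (x - (w + ε₁ - s)) * (x - (w + ε₂ - s)) /
      ((x - (w - s)) * (x - (w + (ε₁ + ε₂) - s))) := by
    rw [Rfac]
    congr 1 <;> ring
  rw [heq] at h ⊢
  exact ((hasValueAt_X_sub_C _ x).mul (hasValueAt_X_sub_C _ x)).div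
    ((hasValueAt_X_sub_C _ x).mul (hasValueAt_X_sub_C _ x)) (div_ne_zero_iff.1 h).2

theorem Yobs_mem_regularAt {x s : ℂ}
    (h : ∀ q ∈ removable lam, x + s ≠ boxWeight ε₁ ε₂ a q + (ε₁ + ε₂)) :
    Yobs N ε₁ ε₂ a s lam ∈ regularAt x := by
  rw [Yobs_eq_div]
  refine ((hasValueAt_prod_X_sub_C _ _ x).div (hasValueAt_prod_X_sub_C _ _ x)
    (Finset.prod_ne_zero_iff.2 fun q hq h0 => h q hq ?_)).1
  linear_combination h0

theorem div_Yobs_mem_regularAt {f : RatFunc ℂ} {x s : ℂ} (hf : f ∈ regularAt x)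
    (h : ∀ q ∈ addable lam, x + s ≠ boxWeight ε₁ ε₂ a q) :
    f / Yobs N ε₁ ε₂ a s lam ∈ regularAt x := by
  rw [Yobs_eq_div, div_div_eq_mul_div]
  refine (((hasValueAt_eval hf).mul (hasValueAt_prod_X_sub_C _ _ x)).div
    (hasValueAt_prod_X_sub_C _ _ x) (Finset.prod_ne_zero_iff.2 fun q hq h0 => h q hq ?_)).1
  linear_combination h0

/-- The residue of `Y(x + ε)` at `x = a_b + c(□)`, after adding the box `p = (b, □)` to `lam`. -/
def resY (ε₁ ε₂ : ℂ) (a : Fin N → ℂ) (lam : Fin N → YoungDiagram) (p : Box N) : ℂ :=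
  ε₁ * ε₂ *
      (∏ q ∈ (addable lam).erase p, (boxWeight ε₁ ε₂ a p + (ε₁ + ε₂) - boxWeight ε₁ ε₂ a q)) /
    ∏ q ∈ removable lam, (boxWeight ε₁ ε₂ a p - boxWeight ε₁ ε₂ a q)

/-- The residue of `1 / Y(x)` on `lam` at `x = a_b + c(□)`, for an addable box `p = (b, □)`. -/
def resInvY (ε₁ ε₂ : ℂ) (a : Fin N → ℂ) (lam : Fin N → YoungDiagram) (p : Box N) : ℂ :=
  (∏ q ∈ removable lam, (boxWeight ε₁ ε₂ a p - (boxWeight ε₁ ε₂ a q + (ε₁ + ε₂)))) /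
    ∏ q ∈ (addable lam).erase p, (boxWeight ε₁ ε₂ a p - boxWeight ε₁ ε₂ a q)

theorem hasResidueAt_Yobs_addAt (hw : Function.Injective (boxWeight ε₁ ε₂ a))
    (h : p ∈ addable lam) (n : ℂ) :
    HasResidueAt (Yobs N ε₁ ε₂ a (ε₁ + ε₂ - n) (addAt lam p)) (n + boxWeight ε₁ ε₂ a p)
      (resY ε₁ ε₂ a lam p) := by
  set x := n + boxWeight ε₁ ε₂ a p with hx
  set s := ε₁ + ε₂ - n with hs
  have hval : resY ε₁ ε₂ a lam p =
      (x - (boxWeight ε₁ ε₂ a p + ε₁ - s)) * (x - (boxWeight ε₁ ε₂ a p + ε₂ - s)) *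
          (∏ q ∈ (addable lam).erase p, (x - (boxWeight ε₁ ε₂ a q - s))) /
        ∏ q ∈ removable lam, (x - (boxWeight ε₁ ε₂ a q + (ε₁ + ε₂) - s)) := by
    rw [resY, hx, hs]
    congr! 2
    · ring
    · exact Finset.prod_congr rfl fun q _ => by ring
    · ring
  have hfun : (RatFunc.X - RatFunc.C x) * Yobs N ε₁ ε₂ a s (addAt lam p) =
      (RatFunc.X - RatFunc.C (boxWeight ε₁ ε₂ a p + ε₁ - s)) *
          (RatFunc.X - RatFunc.C (boxWeight ε₁ ε₂ a p + ε₂ - s)) *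
          (∏ q ∈ (addable lam).erase p, (RatFunc.X - RatFunc.C (boxWeight ε₁ ε₂ a q - s))) /
        ∏ q ∈ removable lam,
          (RatFunc.X - RatFunc.C (boxWeight ε₁ ε₂ a q + (ε₁ + ε₂) - s)) := by
    have hpole : boxWeight ε₁ ε₂ a p + (ε₁ + ε₂) - s = x := by rw [hx, hs]; ring
    rw [Yobs_addAt h, boxFactor, Yobs_eq_div, ← Finset.mul_prod_erase _ _ h, hpole]
    have h₁ := X_sub_C_ne_zero (boxWeight ε₁ ε₂ a p - s)
    have h₂ := X_sub_C_ne_zero x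
    field_simp
  rw [HasResidueAt, hval, hfun]
  refine (((hasValueAt_X_sub_C _ x).mul (hasValueAt_X_sub_C _ x)).mul
    (hasValueAt_prod_X_sub_C _ _ x)).div (hasValueAt_prod_X_sub_C _ _ x)
    (Finset.prod_ne_zero_iff.2 fun q hq h0 => boxWeight_sub_ne_zero hw
      (ne_of_mem_addable_of_mem_removable h hq) ?_)
  rw [← h0, hx, hs]
  ring

theorem hasResidueAt_div_Yobs (hw : Function.Injective (boxWeight ε₁ ε₂ a))
    (h : p ∈ addable lam) {f : RatFunc ℂ} {n v : ℂ}
    (hf : HasValueAt f (n + boxWeight ε₁ ε₂ a p) v) :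
    HasResidueAt (f / Yobs N ε₁ ε₂ a (-n) lam) (n + boxWeight ε₁ ε₂ a p)
      (v * resInvY ε₁ ε₂ a lam p) := by
  set x := n + boxWeight ε₁ ε₂ a p with hx
  have hval : resInvY ε₁ ε₂ a lam p =
      (∏ q ∈ removable lam, (x - (boxWeight ε₁ ε₂ a q + (ε₁ + ε₂) - -n))) /
        ∏ q ∈ (addable lam).erase p, (x - (boxWeight ε₁ ε₂ a q - -n)) := by
    rw [resInvY, hx]
    congr 1 <;> exact Finset.prod_congr rfl fun q _ => by ring
  have hfun : (RatFunc.X - RatFunc.C x) * (f / Yobs N ε₁ ε₂ a (-n) lam) =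
      f * ((∏ q ∈ removable lam,
          (RatFunc.X - RatFunc.C (boxWeight ε₁ ε₂ a q + (ε₁ + ε₂) - -n))) /
        ∏ q ∈ (addable lam).erase p, (RatFunc.X - RatFunc.C (boxWeight ε₁ ε₂ a q - -n))) := by
    have hpole : boxWeight ε₁ ε₂ a p - -n = x := by rw [hx]; ring
    rw [Yobs_eq_div, ← Finset.mul_prod_erase _ _ h, hpole]
    have h₁ := X_sub_C_ne_zero x
    field_simp
  rw [HasResidueAt, hval, hfun]
  refine hf.mul ((hasValueAt_prod_X_sub_C _ _ x).div (hasValueAt_prod_X_sub_C _ _ x)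
    (Finset.prod_ne_zero_iff.2 fun q hq h0 => boxWeight_sub_ne_zero hw
      (Finset.ne_of_mem_erase hq).symm ?_))
  rw [← h0, hx]
  ring

end Residues

section InstantonWeight

variable {N : ℕ} {ε₁ ε₂ : ℂ} {a : Fin N → ℂ} {T : (Fin N → YoungDiagram) → Multiset ℂ}
  {lam : Fin N → YoungDiagram} {p : Box N}

/-- The instanton weight `μ̂` for an arbitrary matter polynomial `P`. -/
def instantonWeight (ε₁ ε₂ : ℂ) (a : Fin N → ℂ) (P : Polynomial ℂ)
    (T : (Fin N → YoungDiagram) → Multiset ℂ) (lam : Fin N → YoungDiagram) : ℂ :=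
  (-1) ^ (N * totalCard N lam) * (∏ q ∈ boxes lam, P.eval (boxWeight ε₁ ε₂ a q)) / (T lam).prod

theorem instantonWeight_addAt (h : p ∈ addable lam) (P : Polynomial ℂ) :
    instantonWeight ε₁ ε₂ a P T (addAt lam p) =
      (-1) ^ (N * totalCard N lam) * (∏ q ∈ boxes lam, P.eval (boxWeight ε₁ ε₂ a q)) *
        ((-1) ^ N * P.eval (boxWeight ε₁ ε₂ a p)) / (T (addAt lam p)).prod := by
  rw [instantonWeight, totalCard_addAt h, prod_boxes_addAt h, mul_add, mul_one, pow_add]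
  ring

theorem neg_one_pow_eq_of_mem_addable (h : p ∈ addable lam) :
    (-1 : ℂ) ^ N = -((-1) ^ (removable lam).card * (-1) ^ ((addable lam).erase p).card) := by
  have hcard : N + (removable lam).card = ((addable lam).erase p).card + 1 := by
    rw [Finset.card_erase_add_one h, card_addable, add_comm]
  have hsq : (-1 : ℂ) ^ (removable lam).card * (-1) ^ (removable lam).card = 1 := by
    rw [← mul_pow]; simp
  have hpow := congrArg (fun k => (-1 : ℂ) ^ k) hcard
  simp only [pow_add, pow_one] at hpow
  linear_combination (-1 : ℂ) ^ (removable lam).card * hpow - (-1) ^ N * hsq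

theorem resInvY_div_prod (hw : Function.Injective (boxWeight ε₁ ε₂ a))
    (hT : IsTangentWeights ε₁ ε₂ a T) (h : p ∈ addable lam) :
    resInvY ε₁ ε₂ a lam p / (T lam).prod =
      -((-1) ^ N * (resY ε₁ ε₂ a lam p / (T (addAt lam p)).prod)) := by
  have hrel := hT.prod_addAt h
  have hR₁ := Finset.prod_ne_zero_iff.2 fun q (hq : q ∈ removable lam) =>
    removable_add_sub_addable_ne_zero hw hq h
  have hR₂ := Finset.prod_ne_zero_iff.2 fun q (hq : q ∈ removable lam) =>
    boxWeight_sub_ne_zero hw (ne_of_mem_addable_of_mem_removable h hq)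
  have hA₁ := Finset.prod_ne_zero_iff.2 fun q (hq : q ∈ (addable lam).erase p) =>
    boxWeight_sub_ne_zero hw (Finset.ne_of_mem_erase hq)
  have hA₂ := Finset.prod_ne_zero_iff.2 fun q (hq : q ∈ (addable lam).erase p) =>
    addable_add_sub_addable_ne_zero hw h (Finset.mem_of_mem_erase hq)
  have hε₁ := ε₁_ne_zero hw p.1
  have hε₂ := ε₂_ne_zero hw p.1
  have hnegR : ∏ q ∈ removable lam, (boxWeight ε₁ ε₂ a p - (boxWeight ε₁ ε₂ a q + (ε₁ + ε₂))) =
      (-1) ^ (removable lam).card *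
        ∏ q ∈ removable lam, (boxWeight ε₁ ε₂ a q + (ε₁ + ε₂) - boxWeight ε₁ ε₂ a p) := by
    simp only [← Finset.prod_neg, neg_sub]
  have hnegA : ∏ q ∈ (addable lam).erase p, (boxWeight ε₁ ε₂ a p - boxWeight ε₁ ε₂ a q) =
      (-1) ^ ((addable lam).erase p).card *
        ∏ q ∈ (addable lam).erase p, (boxWeight ε₁ ε₂ a q - boxWeight ε₁ ε₂ a p) := by
    simp only [← Finset.prod_neg, neg_sub]
  have hsign : ((-1 : ℂ) ^ ((addable lam).erase p).card) ^ 2 = 1 := by simp [← pow_mul]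
  rw [resInvY, resY, hnegR, hnegA, neg_one_pow_eq_of_mem_addable h]
  by_cases ht : (T lam).prod = 0
  · have ht' : (T (addAt lam p)).prod = 0 :=
      (mul_eq_zero_iff_right (mul_ne_zero hR₁ hR₂)).1 (by rw [hrel, ht, zero_mul])
    rw [ht, ht', div_zero, div_zero, mul_zero, neg_zero]
  · have ht' : (T (addAt lam p)).prod ≠ 0 := left_ne_zero_of_mul
      (hrel ▸ mul_ne_zero ht (mul_ne_zero (mul_ne_zero hε₁ hε₂) (mul_ne_zero hA₁ hA₂)))
    field_simp
    rw [hsign]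
    linear_combination hrel

theorem instantonWeight_residue_cancel (hw : Function.Injective (boxWeight ε₁ ε₂ a))
    (hT : IsTangentWeights ε₁ ε₂ a T) (h : p ∈ addable lam) (P : Polynomial ℂ) :
    instantonWeight ε₁ ε₂ a P T (addAt lam p) * resY ε₁ ε₂ a lam p +
      instantonWeight ε₁ ε₂ a P T lam *
        (P.eval (boxWeight ε₁ ε₂ a p) * resInvY ε₁ ε₂ a lam p) = 0 := by
  rw [instantonWeight_addAt h, instantonWeight]
  linear_combination (-1) ^ (N * totalCard N lam) *
    (∏ q ∈ boxes lam, P.eval (boxWeight ε₁ ε₂ a q)) * P.eval (boxWeight ε₁ ε₂ a p) *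
      resInvY_div_prod hw hT h

end InstantonWeight

section Summand

variable {ι : Type*} {N : ℕ} {ε₁ ε₂ : ℂ} {a : Fin N → ℂ} {ν : ι → ℂ} {P : Polynomial ℂ}
  {T : (Fin N → YoungDiagram) → Multiset ℂ} {I J : Finset ι} {lam : Fin N → YoungDiagram}
  {r s : ι} {p : Box N}

theorem Rfac_add_sub_eq (ε₁ ε₂ z : ℂ) : Rfac ε₁ ε₂ (ε₁ + ε₂ - z) = Rfac ε₁ ε₂ z := by
  rw [Rfac, Rfac]
  congr 1 <;> ring

/-- The point `ν_r + a_b + c(□)`, for `x = (r, (b, □))`: the places where the summands of the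
averaged qq-character can have a pole. -/
def pole (ε₁ ε₂ : ℂ) (a : Fin N → ℂ) (ν : ι → ℂ) (x : ι × Box N) : ℂ :=
  ν x.1 + boxWeight ε₁ ε₂ a x.2

theorem boxWeight_injective_of_pole (hpole : Function.Injective (pole ε₁ ε₂ a ν)) (r : ι) :
    Function.Injective (boxWeight ε₁ ε₂ a) := fun p q h =>
  congrArg Prod.snd (@hpole (r, p) (r, q) (congrArg (ν r + ·) h))

theorem Rfac_sub_ne_zero (hpole : Function.Injective (pole ε₁ ε₂ a ν)) (b : Fin N) (h : r ≠ s) :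
    Rfac ε₁ ε₂ (ν r - ν s) ≠ 0 := by
  have hne (c : ℕ × ℕ) : ν r - ν s - content ε₁ ε₂ c ≠ 0 := fun h0 =>
    h (congrArg Prod.fst (@hpole (r, ⟨b, 0⟩) (s, ⟨b, c⟩) (by
      simp only [pole, boxWeight, content_zero]
      linear_combination h0)))
  have h₀ := hne (0, 0)
  have h₁ := hne (1, 0)
  have h₂ := hne (0, 1)
  have h₁₂ := hne (1, 1)
  simp only [content, Nat.cast_zero, Nat.cast_one, zero_mul, one_mul, add_zero, zero_add, sub_zero,
    ← sub_sub] at h₀ h₁ h₂ h₁₂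
  exact div_ne_zero (mul_ne_zero h₁ h₂) (mul_ne_zero h₀ h₁₂)

/-- The matter factor `P(x + s)` as a rational function of `x`. -/
def matter (P : Polynomial ℂ) (s : ℂ) : RatFunc ℂ :=
  algebraMap _ _ (P.comp (Polynomial.X + Polynomial.C s))

theorem hasValueAt_matter (P : Polynomial ℂ) (s x : ℂ) :
    HasValueAt (matter P s) x (P.eval (x + s)) := by
  have h := hasValueAt_algebraMap (P.comp (Polynomial.X + Polynomial.C s)) x
  rwa [Polynomial.eval_comp, Polynomial.eval_add, Polynomial.eval_X, Polynomial.eval_C] at h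

/-- The term `∏_{i∈I} Y(x − ν_i + ε) ∏_{j∈J} P(x − ν_j) / Y(x − ν_j)` of the qq-character,
evaluated at `lam`. -/
def qqMonomial (ε₁ ε₂ : ℂ) (a : Fin N → ℂ) (ν : ι → ℂ) (P : Polynomial ℂ) (I J : Finset ι)
    (lam : Fin N → YoungDiagram) : RatFunc ℂ :=
  (∏ i ∈ I, Yobs N ε₁ ε₂ a (ε₁ + ε₂ - ν i) lam) *
    ∏ j ∈ J, matter P (-ν j) / Yobs N ε₁ ε₂ a (-ν j) lam

theorem qqMonomial_mem_regularAt {x : ℂ}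
    (hI : ∀ i ∈ I, ∀ q ∈ removable lam, x ≠ pole ε₁ ε₂ a ν (i, q))
    (hJ : ∀ j ∈ J, ∀ q ∈ addable lam, x ≠ pole ε₁ ε₂ a ν (j, q)) :
    qqMonomial ε₁ ε₂ a ν P I J lam ∈ regularAt x := by
  refine mul_mem (prod_mem fun i hi => Yobs_mem_regularAt fun q hq h => hI i hi q hq ?_)
    (prod_mem fun j hj => div_Yobs_mem_regularAt (hasValueAt_matter P _ x).1 fun q hq h =>
      hJ j hj q hq ?_)
  · rw [pole]
    linear_combination h
  · rw [pole]
    linear_combination h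

theorem hasValueAt_qqMonomial_addAt (hpole : Function.Injective (pole ε₁ ε₂ a ν))
    (hI : r ∉ I) (hJ : r ∉ J) (hp : p ∈ addable lam) {v : ℂ}
    (h : HasValueAt (qqMonomial ε₁ ε₂ a ν P I J lam) (pole ε₁ ε₂ a ν (r, p)) v) :
    HasValueAt (qqMonomial ε₁ ε₂ a ν P I J (addAt lam p)) (pole ε₁ ε₂ a ν (r, p))
      ((∏ i ∈ I, Rfac ε₁ ε₂ (ν i - ν r)) * (∏ j ∈ J, Rfac ε₁ ε₂ (ν r - ν j))⁻¹ * v) := by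
  have hRI : ∀ i ∈ I, HasValueAt (boxFactor ε₁ ε₂ (ε₁ + ε₂ - ν i) (boxWeight ε₁ ε₂ a p))
      (pole ε₁ ε₂ a ν (r, p)) (Rfac ε₁ ε₂ (ν i - ν r)) := fun i hi => by
    have harg : Rfac ε₁ ε₂ (pole ε₁ ε₂ a ν (r, p) + (ε₁ + ε₂ - ν i) - boxWeight ε₁ ε₂ a p) =
        Rfac ε₁ ε₂ (ν i - ν r) := by
      rw [← Rfac_add_sub_eq, pole]
      ring_nf
    exact harg ▸ hasValueAt_boxFactor
      (harg ▸ Rfac_sub_ne_zero hpole p.1 (ne_of_mem_of_not_mem hi hI))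
  have hRJ : ∀ j ∈ J, HasValueAt (boxFactor ε₁ ε₂ (-ν j) (boxWeight ε₁ ε₂ a p))
      (pole ε₁ ε₂ a ν (r, p)) (Rfac ε₁ ε₂ (ν r - ν j)) := fun j hj => by
    have harg : Rfac ε₁ ε₂ (pole ε₁ ε₂ a ν (r, p) + -ν j - boxWeight ε₁ ε₂ a p) =
        Rfac ε₁ ε₂ (ν r - ν j) := by
      rw [pole]
      ring_nf
    exact harg ▸ hasValueAt_boxFactor
      (harg ▸ Rfac_sub_ne_zero hpole p.1 (ne_of_mem_of_not_mem hj hJ).symm)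
  have hsplit : qqMonomial ε₁ ε₂ a ν P I J (addAt lam p) =
      (∏ i ∈ I, boxFactor ε₁ ε₂ (ε₁ + ε₂ - ν i) (boxWeight ε₁ ε₂ a p)) *
        (∏ j ∈ J, boxFactor ε₁ ε₂ (-ν j) (boxWeight ε₁ ε₂ a p))⁻¹ *
          qqMonomial ε₁ ε₂ a ν P I J lam := by
    simp only [qqMonomial, Yobs_addAt hp, Finset.prod_mul_distrib, Finset.prod_div_distrib]
    simp only [div_eq_mul_inv, mul_inv]
    ring
  rw [hsplit]
  exact ((HasValueAt.prod hRI).mul ((HasValueAt.prod hRJ).inv (Finset.prod_ne_zero_iff.2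
    fun j hj => Rfac_sub_ne_zero hpole p.1 (ne_of_mem_of_not_mem hj hJ).symm))).mul h

variable [Fintype ι] [DecidableEq ι]

/-- The contribution of `I = Jᶜ`, `J` and `lam` to the averaged qq-character. -/
def qqSummand (ε₁ ε₂ : ℂ) (a : Fin N → ℂ) (ν : ι → ℂ) (P : Polynomial ℂ)
    (T : (Fin N → YoungDiagram) → Multiset ℂ) (J : Finset ι) (lam : Fin N → YoungDiagram) :
    RatFunc ℂ :=
  RatFunc.C (instantonWeight ε₁ ε₂ a P T lam) *
    RatFunc.C (∏ i ∈ Jᶜ, ∏ j ∈ J, Rfac ε₁ ε₂ (ν i - ν j)) *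
    qqMonomial ε₁ ε₂ a ν P Jᶜ J lam

theorem qqSummand_mem_regularAt {x : ℂ}
    (hI : ∀ i ∉ J, ∀ q ∈ removable lam, x ≠ pole ε₁ ε₂ a ν (i, q))
    (hJ : ∀ j ∈ J, ∀ q ∈ addable lam, x ≠ pole ε₁ ε₂ a ν (j, q)) :
    qqSummand ε₁ ε₂ a ν P T J lam ∈ regularAt x :=
  mul_mem (mul_mem (hasValueAt_C _ x).1 (hasValueAt_C _ x).1)
    (qqMonomial_mem_regularAt (fun i hi => hI i (Finset.mem_compl.1 hi)) hJ)

theorem hasResidueAt_qqSummand_insert (hpole : Function.Injective (pole ε₁ ε₂ a ν)) (hr : r ∉ J)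
    (hp : p ∈ addable lam) {v : ℂ}
    (hv : HasValueAt (qqMonomial ε₁ ε₂ a ν P (insert r J)ᶜ J lam) (pole ε₁ ε₂ a ν (r, p)) v) :
    HasResidueAt (qqSummand ε₁ ε₂ a ν P T (insert r J) lam) (pole ε₁ ε₂ a ν (r, p))
      (instantonWeight ε₁ ε₂ a P T lam *
        (P.eval (boxWeight ε₁ ε₂ a p) * resInvY ε₁ ε₂ a lam p) *
        ((∏ i ∈ (insert r J)ᶜ, ∏ j ∈ insert r J, Rfac ε₁ ε₂ (ν i - ν j)) * v)) := by
  have hP : HasValueAt (matter P (-ν r)) (ν r + boxWeight ε₁ ε₂ a p)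
      (P.eval (boxWeight ε₁ ε₂ a p)) := by
    simpa using hasValueAt_matter P (-ν r) (ν r + boxWeight ε₁ ε₂ a p)
  have hres := (hasResidueAt_div_Yobs (boxWeight_injective_of_pole hpole r) hp hP).mul_hasValueAt
    (((hasValueAt_C (instantonWeight ε₁ ε₂ a P T lam) _).mul (hasValueAt_C
      (∏ i ∈ (insert r J)ᶜ, ∏ j ∈ insert r J, Rfac ε₁ ε₂ (ν i - ν j)) _)).mul hv)
  convert hres using 1
  · rw [qqSummand, qqMonomial, qqMonomial, Finset.prod_insert hr]
    ring
  · rfl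
  · ring

theorem hasResidueAt_qqSummand_addAt (hpole : Function.Injective (pole ε₁ ε₂ a ν)) (hr : r ∉ J)
    (hp : p ∈ addable lam) {v : ℂ}
    (hv : HasValueAt (qqMonomial ε₁ ε₂ a ν P (insert r J)ᶜ J lam) (pole ε₁ ε₂ a ν (r, p)) v) :
    HasResidueAt (qqSummand ε₁ ε₂ a ν P T J (addAt lam p)) (pole ε₁ ε₂ a ν (r, p))
      (instantonWeight ε₁ ε₂ a P T (addAt lam p) * resY ε₁ ε₂ a lam p *
        ((∏ i ∈ (insert r J)ᶜ, ∏ j ∈ insert r J, Rfac ε₁ ε₂ (ν i - ν j)) * v)) := by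
  have hcompl : Jᶜ = insert r (insert r J)ᶜ := by
    rw [Finset.compl_insert, Finset.insert_erase (Finset.mem_compl.2 hr)]
  have hrI : r ∉ (insert r J)ᶜ := by simp
  have hRJ : ∏ j ∈ J, Rfac ε₁ ε₂ (ν r - ν j) ≠ 0 := Finset.prod_ne_zero_iff.2 fun j hj =>
    Rfac_sub_ne_zero hpole p.1 (ne_of_mem_of_not_mem hj hr).symm
  have hres := (hasResidueAt_Yobs_addAt (boxWeight_injective_of_pole hpole r) hp
    (ν r)).mul_hasValueAt
    (((hasValueAt_C (instantonWeight ε₁ ε₂ a P T (addAt lam p)) _).mul (hasValueAt_C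
      (∏ i ∈ Jᶜ, ∏ j ∈ J, Rfac ε₁ ε₂ (ν i - ν j)) _)).mul
      (hasValueAt_qqMonomial_addAt hpole hrI hr hp hv))
  convert hres using 1
  · rw [qqSummand, qqMonomial, qqMonomial]
    nth_rewrite 2 [hcompl]
    rw [Finset.prod_insert hrI]
    ring
  · rfl
  · rw [hcompl, Finset.prod_insert hrI]
    simp only [Finset.prod_insert hr, Finset.prod_mul_distrib]
    field_simp

theorem qqSummand_insert_add_qqSummand_addAt_mem_regularAt
    (hpole : Function.Injective (pole ε₁ ε₂ a ν)) (hT : IsTangentWeights ε₁ ε₂ a T) (hr : r ∉ J)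
    (hp : p ∈ addable lam) :
    qqSummand ε₁ ε₂ a ν P T (insert r J) lam + qqSummand ε₁ ε₂ a ν P T J (addAt lam p) ∈
      regularAt (pole ε₁ ε₂ a ν (r, p)) := by
  have hne {i : ι} (hi : i ≠ r) (q : Box N) : pole ε₁ ε₂ a ν (r, p) ≠ pole ε₁ ε₂ a ν (i, q) :=
    fun h => hi (congrArg Prod.fst (hpole h)).symm
  have hv := hasValueAt_eval (qqMonomial_mem_regularAt (P := P) (I := (insert r J)ᶜ) (J := J)
    (lam := lam) (fun i hi q _ => hne (by rintro rfl; simp at hi) q)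
    fun j hj q _ => hne (ne_of_mem_of_not_mem hj hr) q)
  have hres := (hasResidueAt_qqSummand_insert (T := T) hpole hr hp hv).add
    (hasResidueAt_qqSummand_addAt (T := T) hpole hr hp hv)
  rw [← add_mul, add_comm (instantonWeight _ _ _ _ _ _ * _),
    instantonWeight_residue_cancel (boxWeight_injective_of_pole hpole r) hT hp P, zero_mul] at hres
  exact hres.mem_regularAt

end Summand

section Average

variable {ι : Type*} [DecidableEq ι] {N : ℕ} {ε₁ ε₂ : ℂ} {a : Fin N → ℂ} {ν : ι → ℂ}
  {T : (Fin N → YoungDiagram) → Multiset ℂ} {J : Finset ι} {lam : Fin N → YoungDiagram}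
  {r : ι} {p : Box N}

/-- The pairing of the summands that share the pole `(r, p)`: it trades the element `r` of `J`
for the box `p` of `lam`, and fixes the summands without this pole. -/
def toggle (r : ι) (p : Box N) (x : Finset ι × (Fin N → YoungDiagram)) :
    Finset ι × (Fin N → YoungDiagram) :=
  if r ∈ x.1 ∧ p ∈ addable x.2 then (x.1.erase r, addAt x.2 p)
  else if r ∉ x.1 ∧ p ∈ removable x.2 then (insert r x.1, removeAt x.2 p)
  else x

theorem toggle_insert (hr : r ∉ J) (hp : p ∈ addable lam) :
    toggle r p (insert r J, lam) = (J, addAt lam p) := by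
  simp [toggle, hp, hr]

theorem toggle_addAt (hr : r ∉ J) (hp : p ∈ addable lam) :
    toggle r p (J, addAt lam p) = (insert r J, lam) := by
  simp [toggle, hr, mem_removable_addAt hp, removeAt_addAt hp]

theorem toggle_eq_self_iff {x : Finset ι × (Fin N → YoungDiagram)} :
    toggle r p x = x ↔ (r ∈ x.1 → p ∉ addable x.2) ∧ (r ∉ x.1 → p ∉ removable x.2) := by
  obtain ⟨J, lam⟩ := x
  rw [← not_and, ← not_and, toggle]
  split_ifs with hadd hrem
  · simp [hadd]
  · simp [hrem]
  · simp [hadd, hrem]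

theorem exists_eq_insert_or_eq_addAt {x : Finset ι × (Fin N → YoungDiagram)}
    (h : toggle r p x ≠ x) :
    ∃ J lam, r ∉ J ∧ p ∈ addable lam ∧ (x = (insert r J, lam) ∨ x = (J, addAt lam p)) := by
  obtain ⟨J, lam⟩ := x
  rw [Ne, toggle_eq_self_iff, ← not_and, ← not_and, not_and_or, not_not, not_not] at h
  obtain ⟨hr, hp⟩ | ⟨hr, hp⟩ := h
  · exact ⟨J.erase r, lam, Finset.notMem_erase r J, hp, .inl (by rw [Finset.insert_erase hr])⟩
  · exact ⟨J, removeAt lam p, hr, mem_addable_removeAt hp, .inr (by rw [addAt_removeAt hp])⟩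

theorem toggle_involutive (r : ι) (p : Box N) : Function.Involutive (toggle r p) := fun x => by
  by_cases hfix : toggle r p x = x
  · rw [hfix, hfix]
  obtain ⟨J, lam, hr, hp, rfl | rfl⟩ := exists_eq_insert_or_eq_addAt hfix
  · rw [toggle_insert hr hp, toggle_addAt hr hp]
  · rw [toggle_addAt hr hp, toggle_insert hr hp]

theorem totalCard_add_card_toggle (r : ι) (p : Box N) (x : Finset ι × (Fin N → YoungDiagram)) :
    totalCard N (toggle r p x).2 + (toggle r p x).1.card = totalCard N x.2 + x.1.card := by
  by_cases hfix : toggle r p x = x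
  · rw [hfix]
  obtain ⟨J, lam, hr, hp, rfl | rfl⟩ := exists_eq_insert_or_eq_addAt hfix
  · rw [toggle_insert hr hp, totalCard_addAt hp, Finset.card_insert_of_notMem hr, add_right_comm,
      add_assoc]
  · rw [toggle_addAt hr hp, totalCard_addAt hp, Finset.card_insert_of_notMem hr, add_right_comm,
      add_assoc]

variable [Fintype ι]

theorem sum_qqSummand_mem_regularAt (hpole : Function.Injective (pole ε₁ ε₂ a ν))
    (hT : IsTangentWeights ε₁ ε₂ a T) (P : Polynomial ℂ)
    {s : Finset (Finset ι × (Fin N → YoungDiagram))} {k : ℕ}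
    (hs : ∀ x, x ∈ s ↔ totalCard N x.2 + x.1.card = k) (x₀ : ℂ) :
    ∑ x ∈ s, qqSummand ε₁ ε₂ a ν P T x.1 x.2 ∈ regularAt x₀ := by
  by_cases hx₀ : ∃ y, pole ε₁ ε₂ a ν y = x₀
  · obtain ⟨⟨r, p⟩, rfl⟩ := hx₀
    refine sum_mem_of_involution (regularAt (pole ε₁ ε₂ a ν (r, p))).toAddSubgroup (toggle r p)
      (toggle_involutive r p) (fun x hx => (hs _).2 ?_) (fun x _ hfix => ?_) fun x _ hne => ?_
    · rw [totalCard_add_card_toggle, (hs x).1 hx]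
    · obtain ⟨hadd, hrem⟩ := toggle_eq_self_iff.1 hfix
      refine qqSummand_mem_regularAt (fun i hi q hq h => ?_) fun j hj q hq h => ?_
      · obtain ⟨rfl, rfl⟩ := Prod.ext_iff.1 (hpole h)
        exact hrem hi hq
      · obtain ⟨rfl, rfl⟩ := Prod.ext_iff.1 (hpole h)
        exact hadd hj hq
    · obtain ⟨J, lam, hr, hp, rfl | rfl⟩ := exists_eq_insert_or_eq_addAt hne
      · rw [toggle_insert hr hp]
        exact qqSummand_insert_add_qqSummand_addAt_mem_regularAt hpole hT hr hp
      · rw [toggle_addAt hr hp, add_comm]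
        exact qqSummand_insert_add_qqSummand_addAt_mem_regularAt hpole hT hr hp
  · exact sum_mem fun x _ => qqSummand_mem_regularAt (fun i _ q _ h => hx₀ ⟨(i, q), h.symm⟩)
      fun j _ q _ h => hx₀ ⟨(j, q), h.symm⟩

end Average

section Specialization

variable {N : ℕ} (ε₁ ε₂ : ℂ) (a : Fin N → ℂ) (m : Fin (2 * N) → ℂ)

theorem matter_prod_X_sub_C (s : ℂ) :
    matter (∏ f, (Polynomial.X - Polynomial.C (m f))) s = Pmat N m s := by
  simp [matter, Pmat, Polynomial.prod_comp]

theorem instantonWeight_prod_X_sub_C (T : (Fin N → YoungDiagram) → Multiset ℂ)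
    (lam : Fin N → YoungDiagram) :
    instantonWeight ε₁ ε₂ a (∏ f, (Polynomial.X - Polynomial.C (m f))) T lam =
      muHat N ε₁ ε₂ a m T lam := by
  simp [instantonWeight, muHat, boxes, boxWeight, Finset.prod_sigma, Polynomial.eval_prod]

theorem qqSummand_prod_X_sub_C {ι : Type*} [Fintype ι] [DecidableEq ι] (ν : ι → ℂ)
    (T : (Fin N → YoungDiagram) → Multiset ℂ) (J : Finset ι) (lam : Fin N → YoungDiagram) :
    qqSummand ε₁ ε₂ a ν (∏ f, (Polynomial.X - Polynomial.C (m f))) T J lam =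
      RatFunc.C (muHat N ε₁ ε₂ a m T lam) *
        RatFunc.C (∏ i ∈ Jᶜ, ∏ j ∈ J, Rfac ε₁ ε₂ (ν i - ν j)) *
        (∏ i ∈ Jᶜ, Yobs N ε₁ ε₂ a (ε₁ + ε₂ - ν i) lam) *
        ∏ j ∈ J, Pmat N m (-ν j) / Yobs N ε₁ ε₂ a (-ν j) lam := by
  simp only [qqSummand, qqMonomial, matter_prod_X_sub_C, instantonWeight_prod_X_sub_C, mul_assoc]

variable {ε₁ ε₂ a} in
theorem pole_injective {ι : Type*} {ν : ι → ℂ}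
    (hgen : ∀ b c : Fin N, ∀ r s : ι, ∀ i j : ℤ,
      a b - a c + ν r - ν s + (i : ℂ) * ε₁ + (j : ℂ) * ε₂ = 0 →
        b = c ∧ r = s ∧ i = 0 ∧ j = 0) :
    Function.Injective (pole ε₁ ε₂ a ν) := by
  rintro ⟨r, b, i, j⟩ ⟨s, c, i', j'⟩ h
  obtain ⟨rfl, rfl, hi, hj⟩ := hgen b c r s (i - i') (j - j') (by
    simp only [pole, boxWeight, content] at h
    push_cast
    linear_combination h)
  obtain rfl : i = i' := by omega
  obtain rfl : j = j' := by omega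
  rfl

end Specialization

end HigherQQ

open HigherQQ in
theorem averaged_higher_qq_character_regular_general {ι : Type*} [Fintype ι] [DecidableEq ι]
    (N : ℕ) (ε₁ ε₂ : ℂ) (a : Fin N → ℂ) (ν : ι → ℂ)
    (hpole : Function.Injective (pole ε₁ ε₂ a ν)) (P : Polynomial ℂ)
    (T : (Fin N → YoungDiagram) → Multiset ℂ) (hT : IsTangentWeights ε₁ ε₂ a T) (k : ℕ) :
    ∃ p : Polynomial ℂ,
      ∑ J : Finset ι, ∑ᶠ lam ∈ {lam : Fin N → YoungDiagram | totalCard N lam + J.card = k},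
        qqSummand ε₁ ε₂ a ν P T J lam = algebraMap (Polynomial ℂ) (RatFunc ℂ) p := by
  obtain ⟨s, hs, hsum⟩ := sum_finsum_mem_totalCard_eq_sum k (qqSummand ε₁ ε₂ a ν P T)
  rw [hsum]
  exact exists_polynomial_of_forall_mem_regularAt
    (sum_qqSummand_mem_regularAt hpole hT P hs)

/-- Regularity of the averaged higher qq-character `𝒳(x; ν)`: coefficientwise in the
instanton counting parameter `𝔮`, the average of
`𝒳(x;ν) = Σ_{I⊔J={1,…,m}} 𝔮^{|J|} ∏_{i∈I,j∈J} R(ν_i−ν_j) ∏_{i∈I} Y(x−ν_i+ε) ∏_{j∈J} P(x−ν_j)/Y(x−ν_j)`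
against the instanton pseudo-measure has no poles in `x`. -/
theorem averaged_higher_qq_character_regular (N mm : ℕ) (hN : 1 ≤ N) (hm : 1 ≤ mm)
    (ε₁ ε₂ : ℂ) (a : Fin N → ℂ) (ν : Fin mm → ℂ)
    (hgen : ∀ b c : Fin N, ∀ r s : Fin mm, ∀ i j : ℤ,
      a b - a c + ν r - ν s + (i : ℂ) * ε₁ + (j : ℂ) * ε₂ = 0 →
        b = c ∧ r = s ∧ i = 0 ∧ j = 0)
    (m : Fin (2 * N) → ℂ)
    (T : (Fin N → YoungDiagram) → Multiset ℂ)
    (hT : ∀ lam : Fin N → YoungDiagram,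
      ((T lam).map fun w => AddMonoidAlgebra.single w (1 : ℤ)).sum = tangentChar N ε₁ ε₂ a lam)
    (k : ℕ) :
    ∃ p : Polynomial ℂ,
      (∑ J : Finset (Fin mm),
        ∑ᶠ lam ∈ {lam : Fin N → YoungDiagram | totalCard N lam + J.card = k},
          RatFunc.C (muHat N ε₁ ε₂ a m T lam) *
            RatFunc.C (∏ i ∈ Jᶜ, ∏ j ∈ J, Rfac ε₁ ε₂ (ν i - ν j)) *
            (∏ i ∈ Jᶜ, Yobs N ε₁ ε₂ a (ε₁ + ε₂ - ν i) lam) *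
            (∏ j ∈ J, Pmat N m (-ν j) / Yobs N ε₁ ε₂ a (-ν j) lam)) =
      algebraMap (Polynomial ℂ) (RatFunc ℂ) p := by
  simp only [← HigherQQ.qqSummand_prod_X_sub_C]
  exact averaged_higher_qq_character_regular_general N ε₁ ε₂ a ν (HigherQQ.pole_injective hgen) _ T
    hT k
end
end

section
/- Let N ≥ 1 and let q: ℤ/N → ℂ satisfy ∏_{ω∈ℤ/N} q_ω ≠ 1. Define U_ω = 1 + q_{ω+1} + q_{ω+1}q_{ω+2} + … + q_{ω+1}⋯q_{ω+N−1}. If U′: ℤ/N → ℂ satisfies the cyclic linear system (1 + q_ω)·U′_ω − U′_{ω−1} − q_{ω+1}·U′_{ω+1} = 0 for all ω ∈ ℤ/N, then there exists a constant c ∈ ℂ such that U′_ω = c·U_ω for all ω; that is, (U_ω)_{ω∈ℤ/N} is, up to an overall scalar factor, the unique solution of this system. -/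
open scoped BigOperators

/-- `U_ω = 1 + q_{ω+1} + q_{ω+1}q_{ω+2} + … + q_{ω+1}⋯q_{ω+N−1}`, indices mod `N`. -/
noncomputable def Ufam (N : ℕ) (q : ZMod N → ℂ) (ω : ZMod N) : ℂ :=
  ∑ l ∈ Finset.range N, ∏ m ∈ Finset.range l, q (ω + ((m + 1 : ℕ) : ZMod N))

/-!
The system is a conservation law: its left-hand side is `D ω - D (ω - 1)`, where
`D ω = U' ω - q (ω + 1) * U' (ω + 1)`, so `D` is a constant `d`. Going once around the cycle with
the first-order recurrence `U' ω = d + q (ω + 1) * U' (ω + 1)` returns to `U' ω` and gives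
`(1 - ∏ σ, q σ) * U' ω = d * U ω`, where the first factor is invertible.
-/

section Cyclic

variable {N : ℕ} [NeZero N]

theorem prod_range_natCast_zmod {M : Type*} [CommMonoid M] (f : ZMod N → M) :
    ∏ m ∈ Finset.range N, f m = ∏ σ, f σ :=
  Finset.prod_bij' (fun m _ ↦ (m : ZMod N)) (fun σ _ ↦ σ.val)
    (fun _ _ ↦ Finset.mem_univ _) (fun σ _ ↦ Finset.mem_range.mpr σ.val_lt)
    (fun _ hm ↦ ZMod.val_cast_of_lt (Finset.mem_range.mp hm))
    (fun σ _ ↦ ZMod.natCast_zmod_val σ) (fun _ _ ↦ rfl)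

theorem prod_range_add_natCast_succ_zmod {M : Type*} [CommMonoid M] (f : ZMod N → M)
    (ω : ZMod N) : ∏ m ∈ Finset.range N, f (ω + ((m + 1 : ℕ) : ZMod N)) = ∏ σ, f σ :=
  calc ∏ m ∈ Finset.range N, f (ω + ((m + 1 : ℕ) : ZMod N))
    _ = ∏ m ∈ Finset.range N, f (ω + 1 + m) :=
      Finset.prod_congr rfl fun m _ ↦ by rw [Nat.cast_succ, add_comm (m : ZMod N), add_assoc]
    _ = ∏ σ, f (ω + 1 + σ) := prod_range_natCast_zmod fun σ ↦ f (ω + 1 + σ)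
    _ = ∏ σ, f σ := Equiv.prod_comp (Equiv.addLeft (ω + 1)) f

end Cyclic

theorem apply_eq_apply_zero_of_periodic_one {N : ℕ} {α : Type*} {f : ZMod N → α}
    (hf : Function.Periodic f 1) (ω : ZMod N) : f ω = f 0 := by
  simpa using hf.int_mul_eq ω.cast

/-- The family `U_ω` of `Ufam`, with coefficients in an arbitrary commutative semiring. -/
def cyclicProdSum {N : ℕ} {R : Type*} [CommSemiring R] (q : ZMod N → R) (ω : ZMod N) : R :=
  ∑ l ∈ Finset.range N, ∏ m ∈ Finset.range l, q (ω + ((m + 1 : ℕ) : ZMod N))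

section Recurrence

variable {R M : Type*} [CommSemiring R] [AddCommMonoid M] [Module R M] {d : M}

theorem apply_zero_eq_sum_prod_smul_add_prod_smul {q : ℕ → R} {a : ℕ → M}
    (ha : ∀ k, a k = d + q k • a (k + 1)) (n : ℕ) :
    a 0 = (∑ l ∈ Finset.range n, ∏ m ∈ Finset.range l, q m) • d
      + (∏ m ∈ Finset.range n, q m) • a n := by
  induction n with
  | zero => simp
  | succ k ih =>
    rw [Finset.sum_range_succ, Finset.prod_range_succ, add_smul, mul_smul, add_assoc,
      ← smul_add, ← ha, ← ih]

theorem eq_cyclicProdSum_smul_add_prod_smul {N : ℕ} [NeZero N] {q : ZMod N → R}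
    {u : ZMod N → M} (hu : ∀ ω, u ω = d + q (ω + 1) • u (ω + 1)) (ω : ZMod N) :
    u ω = cyclicProdSum q ω • d + (∏ σ, q σ) • u ω := by
  have unrolled := apply_zero_eq_sum_prod_smul_add_prod_smul
    (q := fun m ↦ q (ω + ((m + 1 : ℕ) : ZMod N))) (a := fun k ↦ u (ω + k))
    (fun k ↦ by simpa only [Nat.cast_succ, add_assoc] using hu (ω + k)) N
  simpa only [cyclicProdSum, Nat.cast_zero, add_zero, ZMod.natCast_self,
    prod_range_add_natCast_succ_zmod]
    using unrolled

end Recurrence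

section System

variable {N : ℕ} {R M : Type*} [CommRing R] [AddCommGroup M] [Module R M]
  {q : ZMod N → R} {u : ZMod N → M}

theorem exists_forall_eq_add_smul_of_system
    (hu : ∀ ω, (1 + q ω) • u ω - u (ω - 1) - q (ω + 1) • u (ω + 1) = 0) :
    ∃ d : M, ∀ ω, u ω = d + q (ω + 1) • u (ω + 1) := by
  let D : ZMod N → M := fun ω ↦ u ω - q (ω + 1) • u (ω + 1)
  have D_periodic : Function.Periodic D 1 := fun ω ↦ by
    have system_succ := hu (ω + 1)
    rw [add_sub_cancel_right] at system_succ
    rw [← sub_eq_zero, ← system_succ]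
    module
  exact ⟨D 0, fun ω ↦ sub_eq_iff_eq_add.mp (apply_eq_apply_zero_of_periodic_one D_periodic ω)⟩

theorem system_solution_unique_general [NeZero N] (hq : IsUnit (1 - ∏ σ, q σ))
    (hu : ∀ ω, (1 + q ω) • u ω - u (ω - 1) - q (ω + 1) • u (ω + 1) = 0) :
    ∃ c : M, ∀ ω, u ω = cyclicProdSum q ω • c := by
  obtain ⟨d, hd⟩ := exists_forall_eq_add_smul_of_system hu
  obtain ⟨v, hv⟩ := hq
  refine ⟨v⁻¹ • d, fun ω ↦ ?_⟩
  have around_cycle : v • u ω = cyclicProdSum q ω • d := by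
    rw [Units.smul_def, hv, sub_smul, one_smul, sub_eq_iff_eq_add]
    exact eq_cyclicProdSum_smul_add_prod_smul hd ω
  rw [smul_comm, ← around_cycle, inv_smul_smul]

end System

/-- If `∏_ω q_ω ≠ 1`, then any solution `U′` of the cyclic linear system
`(1 + q_ω)·U′_ω − U′_{ω−1} − q_{ω+1}·U′_{ω+1} = 0` is a scalar multiple of `U`. -/
theorem system_solution_unique (N : ℕ) [NeZero N] (q : ZMod N → ℂ)
    (hq : (∏ σ : ZMod N, q σ) ≠ 1)
    (U' : ZMod N → ℂ)
    (hU' : ∀ ω : ZMod N,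
      (1 + q ω) * U' ω - U' (ω - 1) - q (ω + 1) * U' (ω + 1) = 0) :
    ∃ c : ℂ, ∀ ω : ZMod N, U' ω = c * Ufam N q ω := by
  have isUnit_one_sub : IsUnit (1 - ∏ σ, q σ) := (sub_ne_zero.mpr hq.symm).isUnit
  obtain ⟨c, hc⟩ := system_solution_unique_general isUnit_one_sub hU'
  exact ⟨c, fun ω ↦ (hc ω).trans (mul_comm _ c)⟩
end
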